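/- arXiv:1803.09501 — 11 statements merged into one kernel-verified Lean document; each statement's English description precedes it below -/
import Mathlib

section
/- Suppose X and Y are independent and identically distributed H-valued random elements with Bochner mean E X = 0 and E‖X‖² < ∞. Then E[⟨X,Y⟩²] = Σ_{i,j∈ℕ} ( E[⟨X,e_i⟩·⟨X,e_j⟩] )² for every Hilbert (orthonormal) basis (e_i)_{i∈ℕ} of H. (The right-hand side is the squared Hilbert–Schmidt norm ‖E[X ⊗ X]‖₂² of the covariance operator of X.) -/
open MeasureTheory ProbabilityTheory Filter Finset Topology
open scoped NNReal RealInnerProductSpace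

set_option maxHeartbeats 2000000

noncomputable section

/-- **Lemma A.2**: if `X` and `Y` are i.i.d. `H`-valued random elements with zero mean
and finite second moment, then `E⟨X,Y⟩² = Σ_{i,j} (E[⟨X,e_i⟩⟨X,e_j⟩])²`, the squared
Hilbert–Schmidt norm of the covariance operator `E[X ⊗ X]`, for every Hilbert basis
`(e_i)` of `H`. -/
theorem integral_inner_sq_eq_covariance_HS_normSq
    {H : Type*} [NormedAddCommGroup H] [InnerProductSpace ℝ H]
    [CompleteSpace H] [SecondCountableTopology H] [MeasurableSpace H] [BorelSpace H]
    {Ω : Type*} [MeasurableSpace Ω] (P : Measure Ω) [IsProbabilityMeasure P]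
    (X Y : Ω → H) (hX : Measurable X) (hY : Measurable Y)
    (hindep : IndepFun X Y P) (hident : IdentDistrib X Y P P)
    (hXint : Integrable X P) (hmean : (∫ ω, X ω ∂P) = 0)
    (hmom2 : Integrable (fun ω => ‖X ω‖ ^ 2) P)
    (b : HilbertBasis ℕ ℝ H) :
    ∫ ω, ⟪X ω, Y ω⟫ ^ 2 ∂P =
      ∑' q : ℕ × ℕ, (∫ ω, ⟪X ω, b q.1⟫ * ⟪X ω, b q.2⟫ ∂P) ^ 2 := by
  have hs : ∀ x : H, HasSum (fun i => ⟪x, b i⟫ ^ 2) (‖x‖ ^ 2) := by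
    intro x
    have h := b.hasSum_inner_mul_inner x x
    rw [real_inner_self_eq_norm_sq] at h
    have e : (fun i => ⟪x, b i⟫ ^ 2) = fun i => ⟪x, b i⟫ * ⟪b i, x⟫ := by
      funext i
      rw [real_inner_comm x (b i), sq]
    rw [e]
    exact h
  have hp : ∀ x y : H, HasSum (fun q : ℕ × ℕ => ⟪x, b q.1⟫ ^ 2 * ⟪y, b q.2⟫ ^ 2)
      (‖x‖ ^ 2 * ‖y‖ ^ 2) := by
    intro x y
    exact (hs x).mul (hs y) ((hs x).summable.mul_of_nonneg (hs y).summable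
      (fun i => sq_nonneg _) (fun i => sq_nonneg _))
  have hbd : ∀ x y : H, HasSum (fun q : ℕ × ℕ =>
      (⟪x, b q.1⟫ ^ 2 * ⟪y, b q.2⟫ ^ 2 + ⟪y, b q.1⟫ ^ 2 * ⟪x, b q.2⟫ ^ 2) / 2)
      (‖x‖ ^ 2 * ‖y‖ ^ 2) := by
    intro x y
    have h := ((hp x y).add (hp y x)).div_const 2
    have e : (‖x‖ ^ 2 * ‖y‖ ^ 2 + ‖y‖ ^ 2 * ‖x‖ ^ 2) / 2 = ‖x‖ ^ 2 * ‖y‖ ^ 2 := by ring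
    rw [e] at h
    exact h
  have hle : ∀ (x y : H) (q : ℕ × ℕ),
      ‖(⟪x, b q.1⟫ * ⟪x, b q.2⟫) * (⟪y, b q.1⟫ * ⟪y, b q.2⟫)‖ ≤
      (⟪x, b q.1⟫ ^ 2 * ⟪y, b q.2⟫ ^ 2 + ⟪y, b q.1⟫ ^ 2 * ⟪x, b q.2⟫ ^ 2) / 2 := by
    intro x y q
    rw [Real.norm_eq_abs, abs_le]
    constructor
    · nlinarith [sq_nonneg (⟪x, b q.1⟫ * ⟪y, b q.2⟫ + ⟪y, b q.1⟫ * ⟪x, b q.2⟫)]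
    · nlinarith [sq_nonneg (⟪x, b q.1⟫ * ⟪y, b q.2⟫ - ⟪y, b q.1⟫ * ⟪x, b q.2⟫)]
  have hF : ∀ x y : H, HasSum (fun q : ℕ × ℕ =>
      (⟪x, b q.1⟫ * ⟪x, b q.2⟫) * (⟪y, b q.1⟫ * ⟪y, b q.2⟫)) (⟪x, y⟫ ^ 2) := by
    intro x y
    have h1 : HasSum (fun i => ⟪x, b i⟫ * ⟪y, b i⟫) ⟪x, y⟫ := by
      have h := b.hasSum_inner_mul_inner x y
      have e : (fun i => ⟪x, b i⟫ * ⟪y, b i⟫) = fun i => ⟪x, b i⟫ * ⟪b i, y⟫ := by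
        funext i
        rw [real_inner_comm y (b i)]
      rw [e]
      exact h
    have e : (fun q : ℕ × ℕ =>
        (⟪x, b q.1⟫ * ⟪x, b q.2⟫) * (⟪y, b q.1⟫ * ⟪y, b q.2⟫)) =
        fun q : ℕ × ℕ => (⟪x, b q.1⟫ * ⟪y, b q.1⟫) * (⟪x, b q.2⟫ * ⟪y, b q.2⟫) := by
      funext q; ring
    have hsum : Summable (fun q : ℕ × ℕ =>
        (⟪x, b q.1⟫ * ⟪x, b q.2⟫) * (⟪y, b q.1⟫ * ⟪y, b q.2⟫)) :=
      Summable.of_norm_bounded (hbd x y).summable (hle x y)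
    rw [e] at hsum
    have h2 := HasSum.mul h1 h1 hsum
    rw [e, sq]
    exact h2
  have hm : ∀ i, Measurable fun x : H => ⟪x, b i⟫ := fun i => by fun_prop
  have hmom2Y : Integrable (fun ω => ‖Y ω‖ ^ 2) P :=
    (hident.comp (u := fun x : H => ‖x‖ ^ 2) (by fun_prop)).integrable_iff.1 hmom2
  have hint : Integrable (fun ω => ‖X ω‖ ^ 2 * ‖Y ω‖ ^ 2) P :=
    (hindep.comp (φ := fun x : H => ‖x‖ ^ 2) (ψ := fun x : H => ‖x‖ ^ 2)
      (by fun_prop) (by fun_prop)).integrable_mul hmom2 hmom2Y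
  have hmm : ∀ q : ℕ × ℕ, Measurable fun x : H => ⟪x, b q.1⟫ * ⟪x, b q.2⟫ :=
    fun q => (hm q.1).mul (hm q.2)
  have key := hasSum_integral_of_dominated_convergence (μ := P)
    (F := fun (q : ℕ × ℕ) ω =>
      (⟪X ω, b q.1⟫ * ⟪X ω, b q.2⟫) * (⟪Y ω, b q.1⟫ * ⟪Y ω, b q.2⟫))
    (f := fun ω => ⟪X ω, Y ω⟫ ^ 2)
    (fun (q : ℕ × ℕ) ω => (⟪X ω, b q.1⟫ ^ 2 * ⟪Y ω, b q.2⟫ ^ 2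
      + ⟪Y ω, b q.1⟫ ^ 2 * ⟪X ω, b q.2⟫ ^ 2) / 2)
    (fun q => (((hmm q).comp hX).mul ((hmm q).comp hY)).aestronglyMeasurable)
    (fun q => ae_of_all _ fun ω => hle _ _ q)
    (ae_of_all _ fun ω => (hbd _ _).summable)
    (by simpa only [(hbd _ _).tsum_eq] using hint)
    (ae_of_all _ fun ω => hF _ _)
  rw [← key.tsum_eq]
  refine tsum_congr fun q => ?_
  have h1 := (hindep.comp (hmm q) (hmm q)).integral_fun_mul_eq_mul_integral
    ((hmm q).comp hX).aestronglyMeasurable ((hmm q).comp hY).aestronglyMeasurable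
  have h2 := (hident.comp (hmm q)).integral_eq
  simp only [Function.comp_apply] at h1 h2
  rw [h1, ← h2, sq]


end
end

section
/- Suppose (u_t)_{t∈ℤ} is a strong white noise in H. Let t₁, s₁, t₂, s₂, j₁, j₂ be integers with t₁ > s₁, t₂ > s₂, j₁ ≥ 1 and j₂ ≥ 1. Then E[ ⟨u_{t₁},u_{s₁}⟩·⟨u_{s₁−j₁},u_{t₁−j₁}⟩·⟨u_{t₂},u_{s₂}⟩·⟨u_{s₂−j₂},u_{t₂−j₂}⟩ ] = 0 unless both of the following hold: (a) t₁ = t₂, and (b) either (j₁ = j₂ and s₁ = s₂) or (s₁ = t₁ − j₂ and s₂ = t₁ − j₁). -/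
open MeasureTheory ProbabilityTheory Filter Finset Topology
open scoped NNReal RealInnerProductSpace

noncomputable section

lemma isolated_integral_zero
    {H : Type*} [NormedAddCommGroup H] [InnerProductSpace ℝ H]
    [CompleteSpace H] [SecondCountableTopology H] [MeasurableSpace H] [BorelSpace H]
    {Ω : Type*} [MeasurableSpace Ω] (P : Measure Ω) [IsProbabilityMeasure P]
    (u : ℤ → Ω → H)
    (hmeas : ∀ t, Measurable (u t))
    (hindep : iIndepFun u P)
    (hident : ∀ t, IdentDistrib (u t) (u 0) P P)
    (hint : Integrable (u 0) P)
    (hmean : ∫ ω, u 0 ω ∂P = 0)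
    (k a b c d e f g : ℤ)
    (hk : k ≠ a ∧ k ≠ b ∧ k ≠ c ∧ k ≠ d ∧ k ≠ e ∧ k ≠ f ∧ k ≠ g) :
    ∫ ω, ⟪u k ω, u a ω⟫ * ⟪u b ω, u c ω⟫ * ⟪u d ω, u e ω⟫ * ⟪u f ω, u g ω⟫ ∂P = 0 := by
  classical
  obtain ⟨ha, hb, hc, hd, he, hf, hg⟩ := hk
  let T : Finset ℤ := {a, b, c, d, e, f, g}
  let φ : (T → H) → H := fun x =>
    (⟪x ⟨b, by simp [T]⟩, x ⟨c, by simp [T]⟩⟫ * ⟪x ⟨d, by simp [T]⟩, x ⟨e, by simp [T]⟩⟫ *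
      ⟪x ⟨f, by simp [T]⟩, x ⟨g, by simp [T]⟩⟫) • x ⟨a, by simp [T]⟩
  have hφ : Measurable φ := by
    have hp : ∀ i : T, Measurable (fun x : T → H => x i) := fun i => measurable_pi_apply i
    exact ((((hp _).inner (hp _)).mul ((hp _).inner (hp _))).mul
      ((hp _).inner (hp _))).smul (hp _)
  have hdisj : Disjoint ({k} : Finset ℤ) T := by
    simp [T, ha, hb, hc, hd, he, hf, hg]
  have hind0 := hindep.indepFun_finset {k} T hdisj hmeas
  let Z : Ω → H := fun ω => φ (fun i => u i ω)
  have hind : IndepFun (u k) Z P :=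
    hind0.comp (φ := fun x : (({k} : Finset ℤ) → H) => x ⟨k, by simp⟩)
      (measurable_pi_apply _) hφ
  have hZ : Measurable Z := hφ.comp (measurable_pi_lambda _ fun i => hmeas i)
  have heq : (fun ω => ⟪u k ω, u a ω⟫ * ⟪u b ω, u c ω⟫ * ⟪u d ω, u e ω⟫ * ⟪u f ω, u g ω⟫)
      = fun ω => ⟪u k ω, Z ω⟫ := by
    funext ω
    simp only [Z, φ, inner_smul_right]
    ring
  have hmap := (indepFun_iff_map_prod_eq_prod_map_map (hmeas k).aemeasurable
    hZ.aemeasurable).1 hind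
  have hkint : Integrable (u k) P := (hident k).integrable_iff.2 hint
  have hkmean : ∫ ω, u k ω ∂P = 0 := (hident k).integral_eq.trans hmean
  have hin : Measurable (fun p : H × H => ⟪p.1, p.2⟫) := measurable_fst.inner measurable_snd
  have := Measure.isProbabilityMeasure_map (μ := P) (hmeas k).aemeasurable
  have := Measure.isProbabilityMeasure_map (μ := P) hZ.aemeasurable
  rw [heq]
  have h1 : ∫ ω, ⟪u k ω, Z ω⟫ ∂P
      = ∫ p, ⟪p.1, p.2⟫ ∂((P.map (u k)).prod (P.map Z)) := by
    rw [← hmap, integral_map ((hmeas k).prodMk hZ).aemeasurable hin.aestronglyMeasurable]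
  rw [h1]
  by_cases hI : Integrable (fun p : H × H => ⟪p.1, p.2⟫) ((P.map (u k)).prod (P.map Z))
  · rw [integral_prod_symm _ hI]
    have hz : ∀ z : H, ∫ x, ⟪x, z⟫ ∂(P.map (u k)) = 0 := by
      intro z
      have hzm : Measurable (fun x : H => ⟪x, z⟫) := measurable_id.inner measurable_const
      rw [integral_map (hmeas k).aemeasurable hzm.aestronglyMeasurable]
      have : ∀ ω, ⟪u k ω, z⟫ = ⟪z, u k ω⟫ := fun ω => real_inner_comm _ _
      simp only [this]
      rw [integral_inner hkint z, hkmean, inner_zero_right]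
    simp [hz]
  · exact integral_undef hI

/-- **Lemma A.6**: for a strong white noise, with `t₁ > s₁`, `t₂ > s₂`, `j₁, j₂ ≥ 1`,
`E[⟨u_{t₁},u_{s₁}⟩⟨u_{s₁-j₁},u_{t₁-j₁}⟩⟨u_{t₂},u_{s₂}⟩⟨u_{s₂-j₂},u_{t₂-j₂}⟩] = 0`
unless `t₁ = t₂` and (`j₁ = j₂` and `s₁ = s₂`, or `s₁ = t₁ - j₂` and `s₂ = t₁ - j₁`). -/
theorem integral_w_mul_w_eq_zero
    {H : Type*} [NormedAddCommGroup H] [InnerProductSpace ℝ H]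
    [CompleteSpace H] [SecondCountableTopology H] [MeasurableSpace H] [BorelSpace H]
    {Ω : Type*} [MeasurableSpace Ω] (P : Measure Ω) [IsProbabilityMeasure P]
    (u : ℤ → Ω → H)
    (hmeas : ∀ t, Measurable (u t))
    (hindep : iIndepFun u P)
    (hident : ∀ t, IdentDistrib (u t) (u 0) P P)
    (hint : Integrable (u 0) P)
    (hmean : ∫ ω, u 0 ω ∂P = 0)
    (hmom4 : Integrable (fun ω => ‖u 0 ω‖ ^ 4) P)
    (t₁ s₁ t₂ s₂ j₁ j₂ : ℤ) (h₁ : s₁ < t₁) (h₂ : s₂ < t₂) (hj₁ : 1 ≤ j₁) (hj₂ : 1 ≤ j₂)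
    (hcond : ¬ (t₁ = t₂ ∧ ((j₁ = j₂ ∧ s₁ = s₂) ∨ (s₁ = t₁ - j₂ ∧ s₂ = t₁ - j₁)))) :
    ∫ ω, ⟪u t₁ ω, u s₁ ω⟫ * ⟪u (s₁ - j₁) ω, u (t₁ - j₁) ω⟫ *
        ⟪u t₂ ω, u s₂ ω⟫ * ⟪u (s₂ - j₂) ω, u (t₂ - j₂) ω⟫ ∂P = 0 := by
  have key := isolated_integral_zero P u hmeas hindep hident hint hmean
  have hc : ∀ x y : ℤ, ∀ ω, ⟪u x ω, u y ω⟫ = ⟪u y ω, u x ω⟫ := fun x y ω => real_inner_comm _ _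
  rcases lt_trichotomy t₁ t₂ with h | h | h
  · rw [← key t₂ s₂ t₁ s₁ (s₁ - j₁) (t₁ - j₁) (s₂ - j₂) (t₂ - j₂) (by omega)]
    congr 1; funext ω; ring
  · rcases lt_trichotomy (s₁ - j₁) (s₂ - j₂) with h' | h' | h'
    · rw [← key (s₁ - j₁) (t₁ - j₁) t₁ s₁ t₂ s₂ (s₂ - j₂) (t₂ - j₂) (by omega)]
      congr 1; funext ω; ring
    · by_cases h3 : s₁ = t₁ - j₁
      · rw [← key s₂ t₂ t₁ s₁ (s₁ - j₁) (t₁ - j₁) (s₂ - j₂) (t₂ - j₂) (by omega)]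
        congr 1; funext ω; rw [hc s₂ t₂]; ring
      · rw [← key s₁ t₁ (s₁ - j₁) (t₁ - j₁) t₂ s₂ (s₂ - j₂) (t₂ - j₂) (by omega)]
        congr 1; funext ω; rw [hc s₁ t₁]
    · rw [← key (s₂ - j₂) (t₂ - j₂) t₁ s₁ (s₁ - j₁) (t₁ - j₁) t₂ s₂ (by omega)]
      congr 1; funext ω; ring
  · exact key t₁ s₁ (s₁ - j₁) (t₁ - j₁) t₂ s₂ (s₂ - j₂) (t₂ - j₂) (by omega)

end
end

section
/- Suppose X and Y are independent and identically distributed H-valued random elements with Bochner mean E X = 0 and E‖X‖⁴ < ∞. Fix a Hilbert (orthonormal) basis (e_i)_{i∈ℕ} of H and write X_i = ⟨X,e_i⟩ and Y_j = ⟨Y,e_j⟩. Then the following three identities hold: (I) Σ_{i,j∈ℕ} E[X_i²·Y_j²] = (E‖X‖²)²; (II) Σ_{i,j,k,l∈ℕ} ( E[X_i·Y_j·X_k·Y_l] )² = ( Σ_{i,k∈ℕ} (E[X_i·X_k])² )²; (III) Σ_{i,j,k,l,m,p∈ℕ} E[X_i·Y_j·X_k·Y_l]·E[X_k·Y_l·X_m·Y_p]·E[X_m·Y_p·X_i·Y_j]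 = ( Σ_{i,k,m∈ℕ} E[X_i·X_k]·E[X_k·X_m]·E[X_m·X_i] )². (These are, respectively, the identities Tr 𝒜 = (Tr C(0))², Tr 𝒜² = (Tr C(0)²)², Tr 𝒜³ = (Tr C(0)³)² for the operator 𝒜 = E[X⊗Y ⊗̃ X⊗Y] on the Hilbert–Schmidt class and the covariance operator C(0) = E[X⊗X].) -/
open MeasureTheory ProbabilityTheory Filter Finset Topology
open scoped NNReal RealInnerProductSpace

noncomputable section

theorem aux_tsum_sq {ι : Type*} (f : ι → ℝ) :
    ∑' q : ι × ι, f q.1 * f q.2 = (∑' i, f i) ^ 2 := by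
  by_cases hf : Summable f
  · have hs : Summable (fun q : ι × ι => f q.1 * f q.2) :=
      summable_mul_of_summable_norm hf.norm hf.norm
    rw [sq, hf.tsum_mul_tsum hf hs]
  · rw [tsum_eq_zero_of_not_summable hf, tsum_eq_zero_of_not_summable]
    · simp
    · intro h
      have hne : ∃ y, f y ≠ 0 := by
        by_contra! h0
        exact hf ((summable_zero).congr (fun i => by simp [h0 i]))
      obtain ⟨y, hy⟩ := hne
      have h1 : Summable (fun i => f i * f y) :=
        h.comp_injective (i := fun i => (i, y)) (fun a c hac => (Prod.mk.inj hac).1)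
      exact hf ((summable_mul_right_iff hy).1 h1)

theorem aux_hasSum
    {H : Type*} [NormedAddCommGroup H] [InnerProductSpace ℝ H]
    [CompleteSpace H] [SecondCountableTopology H] [MeasurableSpace H] [BorelSpace H]
    {Ω : Type*} [MeasurableSpace Ω] (P : Measure Ω) [IsProbabilityMeasure P]
    (X : Ω → H) (hX : Measurable X)
    (hmom4 : Integrable (fun ω => ‖X ω‖ ^ 4) P)
    (b : HilbertBasis ℕ ℝ H) :
    HasSum (fun i => ∫ ω, ⟪X ω, b i⟫ ^ 2 ∂P) (∫ ω, ‖X ω‖ ^ 2 ∂P) := by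
  have hs : ∀ ω, HasSum (fun i => ⟪X ω, b i⟫ ^ 2) (‖X ω‖ ^ 2) := by
    intro ω
    have h := b.hasSum_inner_mul_inner (X ω) (X ω)
    rw [real_inner_self_eq_norm_sq] at h
    have he : (fun i => ⟪X ω, b i⟫ ^ 2) = fun i => ⟪X ω, b i⟫ * ⟪b i, X ω⟫ := by
      funext i
      rw [sq, real_inner_comm (X ω) (b i)]
    rw [he]
    exact h
  have hm : ∀ i, Measurable (fun ω => ⟪X ω, b i⟫ ^ 2) := fun i => by fun_prop
  refine hasSum_integral_of_dominated_convergence (fun i ω => ⟪X ω, b i⟫ ^ 2)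
    (fun i => (hm i).aestronglyMeasurable) (fun i => ae_of_all _ fun ω => ?_)
    (ae_of_all _ fun ω => (hs ω).summable) ?_ (ae_of_all _ hs)
  · simp
  · simp_rw [fun ω => (hs ω).tsum_eq]
    refine ((integrable_const (1:ℝ)).add hmom4).mono'
      (by fun_prop) (ae_of_all _ fun ω => ?_)
    simp only [norm_pow, norm_norm, Pi.add_apply]
    nlinarith [sq_nonneg (‖X ω‖ ^ 2 - 1), sq_nonneg (‖X ω‖)]

/-- **Lemma B.1**: for i.i.d. `X, Y` with zero mean and finite fourth moment, and a
Hilbert basis `(e_i)` of `H`, writing `X_i = ⟨X,e_i⟩`, `Y_j = ⟨Y,e_j⟩`: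
(I) `Σ_{i,j} E[X_i² Y_j²] = (E‖X‖²)²`,
(II) `Σ_{i,j,k,l} (E[X_i Y_j X_k Y_l])² = (Σ_{i,k} (E[X_i X_k])²)²`,
(III) `Σ_{i,j,k,l,m,p} E[X_i Y_j X_k Y_l] E[X_k Y_l X_m Y_p] E[X_m Y_p X_i Y_j]
        = (Σ_{i,k,m} E[X_i X_k] E[X_k X_m] E[X_m X_i])²`.
These are `Tr 𝒜 = (Tr C(0))²`, `Tr 𝒜² = (Tr C(0)²)²`, `Tr 𝒜³ = (Tr C(0)³)²`. -/
theorem trace_identities_for_tensor_covariance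
    {H : Type*} [NormedAddCommGroup H] [InnerProductSpace ℝ H]
    [CompleteSpace H] [SecondCountableTopology H] [MeasurableSpace H] [BorelSpace H]
    {Ω : Type*} [MeasurableSpace Ω] (P : Measure Ω) [IsProbabilityMeasure P]
    (X Y : Ω → H) (hX : Measurable X) (hY : Measurable Y)
    (hindep : IndepFun X Y P) (hident : IdentDistrib X Y P P)
    (hXint : Integrable X P) (hmean : (∫ ω, X ω ∂P) = 0)
    (hmom4 : Integrable (fun ω => ‖X ω‖ ^ 4) P)
    (b : HilbertBasis ℕ ℝ H) :
    (∑' q : ℕ × ℕ, ∫ ω, ⟪X ω, b q.1⟫ ^ 2 * ⟪Y ω, b q.2⟫ ^ 2 ∂P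
        = (∫ ω, ‖X ω‖ ^ 2 ∂P) ^ 2) ∧
    (∑' q : ℕ × ℕ × ℕ × ℕ,
        (∫ ω, ⟪X ω, b q.1⟫ * ⟪Y ω, b q.2.1⟫ * ⟪X ω, b q.2.2.1⟫ * ⟪Y ω, b q.2.2.2⟫ ∂P) ^ 2
        = (∑' q : ℕ × ℕ, (∫ ω, ⟪X ω, b q.1⟫ * ⟪X ω, b q.2⟫ ∂P) ^ 2) ^ 2) ∧
    (∑' q : ℕ × ℕ × ℕ × ℕ × ℕ × ℕ,
        (∫ ω, ⟪X ω, b q.1⟫ * ⟪Y ω, b q.2.1⟫ * ⟪X ω, b q.2.2.1⟫ * ⟪Y ω, b q.2.2.2.1⟫ ∂P) *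
        (∫ ω, ⟪X ω, b q.2.2.1⟫ * ⟪Y ω, b q.2.2.2.1⟫ * ⟪X ω, b q.2.2.2.2.1⟫ *
            ⟪Y ω, b q.2.2.2.2.2⟫ ∂P) *
        (∫ ω, ⟪X ω, b q.2.2.2.2.1⟫ * ⟪Y ω, b q.2.2.2.2.2⟫ * ⟪X ω, b q.1⟫ *
            ⟪Y ω, b q.2.1⟫ ∂P)
        = (∑' q : ℕ × ℕ × ℕ,
            (∫ ω, ⟪X ω, b q.1⟫ * ⟪X ω, b q.2.1⟫ ∂P) *
            (∫ ω, ⟪X ω, b q.2.1⟫ * ⟪X ω, b q.2.2⟫ ∂P) *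
            (∫ ω, ⟪X ω, b q.2.2⟫ * ⟪X ω, b q.1⟫ ∂P)) ^ 2) := by
  have key : ∀ i j k l, (∫ ω, ⟪X ω, b i⟫ * ⟪Y ω, b j⟫ * ⟪X ω, b k⟫ * ⟪Y ω, b l⟫ ∂P)
      = (∫ ω, ⟪X ω, b i⟫ * ⟪X ω, b k⟫ ∂P) * (∫ ω, ⟪X ω, b j⟫ * ⟪X ω, b l⟫ ∂P) := by
    intro i j k l
    have hm : ∀ i k, Measurable (fun x : H => ⟪x, b i⟫ * ⟪x, b k⟫) := fun i k => by fun_prop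
    have h1 := (hident.comp (hm j l)).integral_eq
    have h2 := (hindep.comp (hm i k) (hm j l)).integral_fun_mul_eq_mul_integral
      ((hm i k).comp hX).aestronglyMeasurable ((hm j l).comp hY).aestronglyMeasurable
    simp only [Function.comp_def] at h1 h2
    rw [h1, ← h2]
    congr 1
    ext ω
    ring
  have hI := aux_hasSum P X hX hmom4 b
  refine ⟨?_, ?_, ?_⟩
  · rw [← hI.tsum_eq, ← aux_tsum_sq]
    refine tsum_congr fun q => ?_
    have h := key q.1 q.2 q.1 q.2
    simp only [sq]
    rw [← h]
    congr 1
    ext ω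
    ring
  · simp_rw [key]
    rw [← aux_tsum_sq]
    let e : ℕ × ℕ × ℕ × ℕ ≃ (ℕ × ℕ) × (ℕ × ℕ) :=
      { toFun := fun q => ((q.1, q.2.2.1), (q.2.1, q.2.2.2))
        invFun := fun r => (r.1.1, r.2.1, r.1.2, r.2.2)
        left_inv := fun _ => rfl
        right_inv := fun _ => rfl }
    rw [← e.tsum_eq]
    refine tsum_congr fun q => ?_
    simp only [e, Equiv.coe_fn_mk]
    ring
  · simp_rw [key]
    rw [← aux_tsum_sq]
    let e : ℕ × ℕ × ℕ × ℕ × ℕ × ℕ ≃ (ℕ × ℕ × ℕ) × (ℕ × ℕ × ℕ) :=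
      { toFun := fun q => ((q.1, q.2.2.1, q.2.2.2.2.1), (q.2.1, q.2.2.2.1, q.2.2.2.2.2))
        invFun := fun r => (r.1.1, r.2.1, r.1.2.1, r.2.2.1, r.1.2.2, r.2.2.2)
        left_inv := fun _ => rfl
        right_inv := fun _ => rfl }
    rw [← e.tsum_eq]
    refine tsum_congr fun q => ?_
    simp only [e, Equiv.coe_fn_mk]
    ring

end
end

section
/- Suppose (u_t)_{t∈ℤ} is a strong white noise in H and set σ² = E‖u₀‖². Then for every n ≥ 1 and every integer 1 ≤ j ≤ n−1, E[ n^{-2}·Σ_{t=j+1}^n Σ_{s=j+1}^n ⟨u_t,u_s⟩·⟨u_{t−j},u_{s−j}⟩ ] = (1 − j/n)·σ⁴/n. Consequently, for any kernel values k(j/p_n), E[Q̂_n²] = 2·σ⁴·n^{-1}·C_n(k), where Q̂_n² = 2·Σ_{j=1}^{n−1} k(j/p_n)²·n^{-2}·Σ_{t=j+1}^n Σ_{s=j+1}^n ⟨u_t,u_s⟩·⟨u_{t−j},u_{s−j}⟩ and C_n(k) = Σ_{j=1}^{n−1} (1−j/n)·k(j/p_n)². -/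
open MeasureTheory ProbabilityTheory Filter Finset Topology
open scoped NNReal RealInnerProductSpace

noncomputable section

variable {H : Type*} [NormedAddCommGroup H] [InnerProductSpace ℝ H]
variable {Ω : Type*} [MeasurableSpace Ω]

/-- Squared Hilbert–Schmidt norm of the sample autocovariance operator `Ĉ_n(j)`,
written out in terms of inner products:
`‖Ĉ_n(j)‖₂² = n⁻² Σ_{t=j+1}^n Σ_{s=j+1}^n ⟨u_t,u_s⟩⟨u_{t-j},u_{s-j}⟩`. -/
def hatCSq (u : ℤ → Ω → H) (n : ℕ) (j : ℤ) (ω : Ω) : ℝ :=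
  ((n : ℝ) ^ 2)⁻¹ * ∑ t ∈ Finset.Icc (j + 1) (n : ℤ), ∑ s ∈ Finset.Icc (j + 1) (n : ℤ),
    ⟪u t ω, u s ω⟫ * ⟪u (t - j) ω, u (s - j) ω⟫

/-- `σ̂_n² = n⁻¹ Σ_{t=1}^n ‖u_t‖²`. -/
def hatSigmaSq (u : ℤ → Ω → H) (n : ℕ) (ω : Ω) : ℝ :=
  (n : ℝ)⁻¹ * ∑ t ∈ Finset.Icc (1 : ℤ) (n : ℤ), ‖u t ω‖ ^ 2

/-- `Q̂_n² = 2 Σ_{j=1}^{n-1} k(j/p_n)² ‖Ĉ_n(j)‖₂²`. -/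
def hatQSq (u : ℤ → Ω → H) (k : ℝ → ℝ) (p : ℝ) (n : ℕ) (ω : Ω) : ℝ :=
  2 * ∑ j ∈ Finset.Icc 1 (n - 1), k ((j : ℝ) / p) ^ 2 * hatCSq u n (j : ℤ) ω

/-- `C_n(k) = Σ_{j=1}^{n-1} (1 - j/n) k(j/p_n)²`. -/
def Cn (k : ℝ → ℝ) (p : ℝ) (n : ℕ) : ℝ :=
  ∑ j ∈ Finset.Icc 1 (n - 1), (1 - (j : ℝ) / n) * k ((j : ℝ) / p) ^ 2

/-- `D_n(k) = Σ_{j=1}^{n-2} (1 - j/n)(1 - (j+1)/n) k(j/p_n)⁴`. -/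
def Dn (k : ℝ → ℝ) (p : ℝ) (n : ℕ) : ℝ :=
  ∑ j ∈ Finset.Icc 1 (n - 2),
    (1 - (j : ℝ) / n) * (1 - ((j : ℝ) + 1) / n) * k ((j : ℝ) / p) ^ 4

/-- The test statistic `T_n`. -/
def Tstat (u : ℤ → Ω → H) (k : ℝ → ℝ) (p : ℕ → ℝ) (n : ℕ) (ω : Ω) : ℝ :=
  ((n : ℝ) * hatQSq u k (p n) n ω / 2 - hatSigmaSq u n ω ^ 2 * Cn k (p n) n) /
    (hatCSq u n 0 ω * Real.sqrt (2 * Dn k (p n) n))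

/-- A kernel: symmetric, `k(0)=1`, values in `[-1,1]`, continuous at `0` and at all but
finitely many points, with `|k(x)| ≤ c x^{-α}`, `α > 1/2`, for large `x`. -/
def IsKernel (k : ℝ → ℝ) : Prop :=
  (∀ x, k x ∈ Set.Icc (-1 : ℝ) 1) ∧ (∀ x, k (-x) = k x) ∧ k 0 = 1 ∧
    ContinuousAt k 0 ∧ {x : ℝ | ¬ ContinuousAt k x}.Finite ∧
    ∃ α > (1 / 2 : ℝ), ∃ c > (0 : ℝ), ∃ x₀ > (0 : ℝ), ∀ x ≥ x₀, |k x| ≤ c * x ^ (-α)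

/-- A bandwidth: positive reals with `p_n → ∞` and `p_n/n → 0`. -/
def IsBandwidth (p : ℕ → ℝ) : Prop :=
  (∀ n, 0 < p n) ∧ Tendsto p atTop atTop ∧
    Tendsto (fun n => p n / (n : ℝ)) atTop (𝓝 0)

lemma four_mul_le (a b c d : ℝ) :
    |a * b * (c * d)| ≤ a ^ 4 + b ^ 4 + c ^ 4 + d ^ 4 := by
  rw [abs_le]
  constructor <;>
  nlinarith [sq_nonneg (a * b + c * d), sq_nonneg (a * b - c * d), sq_nonneg (a ^ 2 - b ^ 2),
    sq_nonneg (c ^ 2 - d ^ 2), sq_nonneg (a ^ 2), sq_nonneg (b ^ 2), sq_nonneg (c ^ 2),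
    sq_nonneg (d ^ 2)]

lemma term_integrable [SecondCountableTopology H] [MeasurableSpace H] [BorelSpace H]
    {P : Measure Ω} {u : ℤ → Ω → H} (hmeas : ∀ t, Measurable (u t))
    (h4 : ∀ t, Integrable (fun ω => ‖u t ω‖ ^ 4) P) (a b c d : ℤ) :
    Integrable (fun ω => ⟪u a ω, u b ω⟫ * ⟪u c ω, u d ω⟫) P := by
  refine Integrable.mono' ((((h4 a).add (h4 b)).add (h4 c)).add (h4 d)) ?_ ?_
  · exact (((hmeas a).inner (hmeas b)).mul ((hmeas c).inner (hmeas d))).aestronglyMeasurable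
  · refine ae_of_all _ fun ω => ?_
    have h1 := abs_real_inner_le_norm (u a ω) (u b ω)
    have h2 := abs_real_inner_le_norm (u c ω) (u d ω)
    have h3 := four_mul_le ‖u a ω‖ ‖u b ω‖ ‖u c ω‖ ‖u d ω‖
    rw [Real.norm_eq_abs, abs_mul]
    refine le_trans (mul_le_mul h1 h2 (abs_nonneg _) (by positivity)) ?_
    exact le_trans (le_abs_self _) h3

lemma term_zero [CompleteSpace H] [SecondCountableTopology H] [MeasurableSpace H]
    [BorelSpace H]
    {P : Measure Ω} [IsProbabilityMeasure P] {u : ℤ → Ω → H} (hmeas : ∀ t, Measurable (u t))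
    (hindep : iIndepFun u P)
    (h1 : ∀ t, Integrable (u t) P) (h0 : ∀ t, ∫ ω, u t ω ∂P = 0)
    (h4 : ∀ t, Integrable (fun ω => ‖u t ω‖ ^ 4) P) (a b c d : ℤ)
    (hb : a ≠ b) (hc : a ≠ c) (hd : a ≠ d) :
    ∫ ω, ⟪u a ω, u b ω⟫ * ⟪u c ω, u d ω⟫ ∂P = 0 := by
  have hV : Integrable (fun ω => ⟪u c ω, u d ω⟫ • u b ω) P := by
    refine Integrable.mono' ((((integrable_const (1 : ℝ)).add (h4 b)).add (h4 c)).add (h4 d)) ?_ ?_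
    · exact (((hmeas c).inner (hmeas d)).smul (hmeas b)).aestronglyMeasurable
    · refine ae_of_all _ fun ω => ?_
      have h2 := abs_real_inner_le_norm (u c ω) (u d ω)
      have h3 := four_mul_le 1 ‖u b ω‖ ‖u c ω‖ ‖u d ω‖
      rw [norm_smul, Real.norm_eq_abs]
      refine le_trans (mul_le_mul_of_nonneg_right h2 (norm_nonneg _)) ?_
      refine le_trans (le_of_eq ?_) (le_trans (le_abs_self _) (h3.trans_eq ?_))
      · ring
      · simp
  have hI : IndepFun (u a) (fun ω => ⟪u c ω, u d ω⟫ • u b ω) P := by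
    have h := hindep.indepFun_finset {a} {b, c, d} (by simp [hb, hc, hd]) hmeas
    let f : (({a} : Finset ℤ) → H) → H := fun x => x ⟨a, by simp⟩
    let g : (({b, c, d} : Finset ℤ) → H) → H :=
      fun x => ⟪x ⟨c, by simp⟩, x ⟨d, by simp⟩⟫ • x ⟨b, by simp⟩
    have hf : Measurable f := measurable_pi_apply _
    have hp : ∀ i : ({b, c, d} : Finset ℤ),
        Measurable (fun x : (({b, c, d} : Finset ℤ) → H) => x i) := fun i => measurable_pi_apply i
    have hg : Measurable g :=
      ((hp ⟨c, by simp⟩).inner (hp ⟨d, by simp⟩)).smul (hp ⟨b, by simp⟩)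
    exact h.comp hf hg
  have h : ∫ ω, ⟪u a ω, ⟪u c ω, u d ω⟫ • u b ω⟫ ∂P =
      ⟪∫ ω, u a ω ∂P, ∫ ω, ⟪u c ω, u d ω⟫ • u b ω ∂P⟫ :=
    hI.integral_bilin (h1 a) hV (innerSL ℝ)
  rw [h0 a] at h
  simp only [inner_smul_right, inner_zero_left] at h
  rw [← h]
  exact integral_congr_ae (ae_of_all _ fun ω => by simp only []; ring)

lemma term_diag [CompleteSpace H] [SecondCountableTopology H] [MeasurableSpace H]
    [BorelSpace H]
    {P : Measure Ω} [IsProbabilityMeasure P] {u : ℤ → Ω → H} (hmeas : ∀ t, Measurable (u t))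
    (hindep : iIndepFun u P) (σ2 : ℝ) (h2 : ∀ t, ∫ ω, ‖u t ω‖ ^ 2 ∂P = σ2)
    (a c : ℤ) (hc : a ≠ c) :
    ∫ ω, ⟪u a ω, u a ω⟫ * ⟪u c ω, u c ω⟫ ∂P = σ2 ^ 2 := by
  simp only [real_inner_self_eq_norm_sq]
  have hm : Measurable (fun x : H => ‖x‖ ^ 2) := by fun_prop
  rw [(hindep.indepFun hc).integral_fun_comp_mul_comp (f := fun x => ‖x‖ ^ 2)
    (g := fun x => ‖x‖ ^ 2) (hmeas a).aemeasurable (hmeas c).aemeasurable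
    hm.aestronglyMeasurable hm.aestronglyMeasurable, h2, h2, sq]

lemma hatCSq_integrable [SecondCountableTopology H] [MeasurableSpace H] [BorelSpace H]
    {P : Measure Ω} {u : ℤ → Ω → H} (hmeas : ∀ t, Measurable (u t))
    (h4 : ∀ t, Integrable (fun ω => ‖u t ω‖ ^ 4) P) (n : ℕ) (j : ℤ) :
    Integrable (hatCSq u n j) P := by
  unfold hatCSq
  exact (integrable_finsetSum _ fun t _ => integrable_finsetSum _ fun s _ =>
    term_integrable hmeas h4 _ _ _ _).const_mul _

/-- Equation (A.1): for a strong white noise with `σ² = E‖u₀‖²`, the expected squared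
HS-norm of the sample autocovariance is `E‖Ĉ_n(j)‖₂² = (1 - j/n) σ⁴ / n` for
`1 ≤ j ≤ n - 1`, and consequently `E Q̂_n² = 2 σ⁴ n⁻¹ C_n(k)`. -/
theorem expectation_hatCSq_and_hatQSq
    [CompleteSpace H] [SecondCountableTopology H] [MeasurableSpace H] [BorelSpace H]
    (P : Measure Ω) [IsProbabilityMeasure P]
    (u : ℤ → Ω → H)
    (hmeas : ∀ t, Measurable (u t))
    (hindep : iIndepFun u P)
    (hident : ∀ t, IdentDistrib (u t) (u 0) P P)
    (hint : Integrable (u 0) P)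
    (hmean : ∫ ω, u 0 ω ∂P = 0)
    (hmom4 : Integrable (fun ω => ‖u 0 ω‖ ^ 4) P)
    (σ2 : ℝ) (hσ2 : σ2 = ∫ ω, ‖u 0 ω‖ ^ 2 ∂P)
    (k : ℝ → ℝ) (hk : ∀ x, k x ∈ Set.Icc (-1 : ℝ) 1) (p : ℝ) (hp : 0 < p) :
    (∀ n : ℕ, 1 ≤ n → ∀ j : ℕ, 1 ≤ j → j ≤ n - 1 →
      ∫ ω, hatCSq u n (j : ℤ) ω ∂P = (1 - (j : ℝ) / n) * σ2 ^ 2 / n) ∧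
    (∀ n : ℕ, 1 ≤ n →
      ∫ ω, hatQSq u k p n ω ∂P = 2 * σ2 ^ 2 * (n : ℝ)⁻¹ * Cn k p n) := by
  have hnorm : Measurable (fun x : H => ‖x‖) := measurable_norm
  have h1 : ∀ t, Integrable (u t) P := fun t => (hident t).integrable_iff.2 hint
  have h0 : ∀ t, ∫ ω, u t ω ∂P = 0 := fun t => (hident t).integral_eq.trans hmean
  have h4 : ∀ t, Integrable (fun ω => ‖u t ω‖ ^ 4) P := fun t =>
    ((hident t).comp (hnorm.pow_const 4)).integrable_iff.2 hmom4
  have h2 : ∀ t, ∫ ω, ‖u t ω‖ ^ 2 ∂P = σ2 := fun t =>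
    ((hident t).comp (hnorm.pow_const 2)).integral_eq.trans hσ2.symm
  have key : ∀ n : ℕ, 1 ≤ n → ∀ j : ℕ, 1 ≤ j → j ≤ n - 1 →
      ∫ ω, hatCSq u n (j : ℤ) ω ∂P = (1 - (j : ℝ) / n) * σ2 ^ 2 / n := by
    intro n hn j hj hjn
    have hterm : ∀ t s : ℤ,
        ∫ ω, ⟪u t ω, u s ω⟫ * ⟪u (t - j) ω, u (s - j) ω⟫ ∂P = if t = s then σ2 ^ 2 else 0 := by
      intro t s
      split_ifs with hts
      · subst hts
        exact term_diag hmeas hindep σ2 h2 _ _ (by omega)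
      · rcases lt_or_gt_of_ne hts with h | h
        · rw [← term_zero hmeas hindep h1 h0 h4 s t (t - j) (s - j)
            (by omega) (by omega) (by omega)]
          simp only [real_inner_comm]
        · exact term_zero hmeas hindep h1 h0 h4 t s (t - j) (s - j)
            (by omega) (by omega) (by omega)
    unfold hatCSq
    rw [integral_const_mul, integral_finsetSum _ fun t _ => integrable_finsetSum _ fun s _ =>
      term_integrable hmeas h4 _ _ _ _]
    have : ∀ t ∈ Finset.Icc ((j : ℤ) + 1) n, ∫ ω, ∑ s ∈ Finset.Icc ((j : ℤ) + 1) n,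
        ⟪u t ω, u s ω⟫ * ⟪u (t - j) ω, u (s - j) ω⟫ ∂P = σ2 ^ 2 := by
      intro t ht
      rw [integral_finsetSum _ fun s _ => term_integrable hmeas h4 _ _ _ _]
      simp only [hterm, Finset.sum_ite_eq, ht, if_true]
    rw [Finset.sum_congr rfl this, Finset.sum_const, Int.card_Icc]
    have hc : ((n : ℤ) + 1 - ((j : ℤ) + 1)).toNat = n - j := by omega
    have hn0 : (n : ℝ) ≠ 0 := by positivity
    rw [hc, nsmul_eq_mul, Nat.cast_sub (by omega)]
    field_simp
  refine ⟨key, fun n hn => ?_⟩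
  unfold hatQSq Cn
  rw [integral_const_mul, integral_finsetSum _ fun (j : ℕ) _ =>
    (hatCSq_integrable hmeas h4 n (j : ℤ)).const_mul _, Finset.mul_sum, Finset.mul_sum]
  refine Finset.sum_congr rfl fun j hj => ?_
  rw [Finset.mem_Icc] at hj
  rw [integral_const_mul, key n hn j hj.1 hj.2]
  ring

end
end

section
/- Suppose (u_t)_{t∈ℤ} is a strong white noise in H and set σ² = E‖u₀‖² and μ₄ = E‖u₀‖⁴. Then for every n ≥ 1 and every integer 1 ≤ j ≤ n−1, E[ ( Σ_{t=j+1}^n ( ‖u_t‖²·‖u_{t−j}‖² − σ⁴ ) )² ] ≤ 3·n·μ₄². -/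
open MeasureTheory ProbabilityTheory Filter Finset Topology
open scoped NNReal RealInnerProductSpace

noncomputable section

lemma aux_real {Ω : Type*} [MeasurableSpace Ω] (P : Measure Ω) [IsProbabilityMeasure P]
    (X : ℤ → Ω → ℝ) (hX : ∀ t, Measurable (X t)) (hind : iIndepFun X P) (m q : ℝ)
    (h1 : ∀ t, Integrable (X t) P) (h2 : ∀ t, Integrable (fun ω => X t ω ^ 2) P)
    (e1 : ∀ t, ∫ ω, X t ω ∂P = m) (e2 : ∀ t, ∫ ω, X t ω ^ 2 ∂P = q)
    (n j : ℕ) (hj : 1 ≤ j) :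
    ∫ ω, (∑ t ∈ Finset.Icc ((j : ℤ) + 1) (n : ℤ),
          (X t ω * X (t - j) ω - m ^ 2)) ^ 2 ∂P ≤ 3 * n * q ^ 2 := by
  have hne : ∀ t : ℤ, t ≠ t - j := fun t => by omega
  have iY : ∀ t : ℤ, Integrable (fun ω => X t ω * X (t - j) ω) P := fun t =>
    (hind.indepFun (hne t)).integrable_mul (h1 _) (h1 _)
  have eY : ∀ t : ℤ, ∫ ω, X t ω * X (t - j) ω ∂P = m ^ 2 := fun t => by
    have := (hind.indepFun (hne t)).integral_fun_mul_eq_mul_integral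
      (h1 _).aestronglyMeasurable (h1 _).aestronglyMeasurable
    rw [this, e1, e1, sq]
  have hsq : ∀ t : ℤ, IndepFun (fun ω => X t ω ^ 2) (fun ω => X (t - j) ω ^ 2) P := fun t =>
    (hind.indepFun (hne t)).comp (φ := fun x : ℝ => x ^ 2) (ψ := fun x : ℝ => x ^ 2)
      (by fun_prop) (by fun_prop)
  have iY2 : ∀ t : ℤ, Integrable (fun ω => X t ω ^ 2 * X (t - j) ω ^ 2) P := fun t =>
    (hsq t).integrable_mul (h2 _) (h2 _)
  have eY2 : ∀ t : ℤ, ∫ ω, X t ω ^ 2 * X (t - j) ω ^ 2 ∂P = q ^ 2 := fun t => by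
    have := (hsq t).integral_fun_mul_eq_mul_integral
      (h2 _).aestronglyMeasurable (h2 _).aestronglyMeasurable
    rw [this, e2, e2, sq]
  set Z : ℤ → Ω → ℝ := fun t ω => X t ω * X (t - j) ω - m ^ 2 with hZ
  have mZ : ∀ t, Measurable (Z t) := fun t => by
    have := hX t
    have := hX (t - j)
    simp only [hZ]
    fun_prop
  have iZ : ∀ t, Integrable (Z t) P := fun t => (iY t).sub (integrable_const _)
  have eZ : ∀ t, ∫ ω, Z t ω ∂P = 0 := fun t => by
    simp only [hZ]
    rw [integral_sub (iY t) (integrable_const _), eY]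
    simp
  have Zsq : ∀ t, (fun ω => Z t ω ^ 2) =
      fun ω => (X t ω ^ 2 * X (t - j) ω ^ 2 - 2 * m ^ 2 * (X t ω * X (t - j) ω)) + m ^ 4 :=
    fun t => by
      funext ω
      simp only [hZ]
      ring
  have iZ2 : ∀ t, Integrable (fun ω => Z t ω ^ 2) P := fun t => by
    rw [Zsq]
    exact ((iY2 t).sub ((iY t).const_mul _)).add (integrable_const _)
  have eZ2 : ∀ t, ∫ ω, Z t ω ^ 2 ∂P ≤ q ^ 2 := fun t => by
    have hs : Integrable (fun ω => X t ω ^ 2 * X (t - j) ω ^ 2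
        - 2 * m ^ 2 * (X t ω * X (t - j) ω)) P := (iY2 t).sub ((iY t).const_mul _)
    rw [Zsq, integral_add hs (integrable_const _),
      integral_sub (iY2 t) ((iY t).const_mul _), integral_const_mul, eY, eY2]
    simp
    nlinarith [sq_nonneg (m ^ 2)]
  have L2 : ∀ t, MemLp (Z t) 2 P := fun t =>
    (memLp_two_iff_integrable_sq (mZ t).aestronglyMeasurable).2 (iZ2 t)
  have iZZ : ∀ s t, Integrable (fun ω => Z s ω * Z t ω) P := fun s t =>
    (L2 s).integrable_mul (L2 t)
  have bZZ : ∀ s t, ∫ ω, Z s ω * Z t ω ∂P ≤ q ^ 2 := fun s t => by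
    have : ∫ ω, Z s ω * Z t ω ∂P ≤ ∫ ω, (Z s ω ^ 2 + Z t ω ^ 2) / 2 ∂P := by
      refine integral_mono (iZZ s t) (((iZ2 s).add (iZ2 t)).div_const 2) fun ω => ?_
      show Z s ω * Z t ω ≤ (Z s ω ^ 2 + Z t ω ^ 2) / 2
      nlinarith [sq_nonneg (Z s ω - Z t ω)]
    rw [integral_div, integral_add (iZ2 s) (iZ2 t)] at this
    linarith [eZ2 s, eZ2 t]
  have zZZ : ∀ s t : ℤ, t ∉ ({s, s + j, s - j} : Finset ℤ) → ∫ ω, Z s ω * Z t ω ∂P = 0 := by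
    intro s t h
    simp only [Finset.mem_insert, Finset.mem_singleton, not_or] at h
    have hi := hind.indepFun_prodMk_prodMk hX s (s - j) t (t - j)
      (by omega) (by omega) (by omega) (by omega)
    have hi2 : IndepFun (Z s) (Z t) P :=
      hi.comp (φ := fun p : ℝ × ℝ => p.1 * p.2 - m ^ 2) (ψ := fun p : ℝ × ℝ => p.1 * p.2 - m ^ 2)
        (by fun_prop) (by fun_prop)
    rw [hi2.integral_fun_mul_eq_mul_integral (iZ s).aestronglyMeasurable
      (iZ t).aestronglyMeasurable, eZ, zero_mul]
  set I := Finset.Icc ((j : ℤ) + 1) (n : ℤ)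
  have key : ∀ s, ∑ t ∈ I, ∫ ω, Z s ω * Z t ω ∂P ≤ 3 * q ^ 2 := fun s => by
    calc ∑ t ∈ I, ∫ ω, Z s ω * Z t ω ∂P
        ≤ ∑ t ∈ I, if t ∈ ({s, s + j, s - j} : Finset ℤ) then q ^ 2 else 0 := by
          refine Finset.sum_le_sum fun t _ => ?_
          split_ifs with h
          · exact bZZ s t
          · exact (zZZ s t h).le
      _ = ((I.filter (· ∈ ({s, s + j, s - j} : Finset ℤ))).card : ℝ) * q ^ 2 := by
          rw [← Finset.sum_filter, Finset.sum_const, nsmul_eq_mul]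
      _ ≤ 3 * q ^ 2 := by
          have : (I.filter (· ∈ ({s, s + j, s - j} : Finset ℤ))).card ≤ 3 :=
            (Finset.card_le_card fun x hx => (Finset.mem_filter.1 hx).2).trans Finset.card_le_three
          have : ((I.filter (· ∈ ({s, s + j, s - j} : Finset ℤ))).card : ℝ) ≤ 3 := by
            exact_mod_cast this
          gcongr
  have hc : (I.card : ℝ) ≤ n := by
    have : I.card ≤ n := by
      simp only [I, Int.card_Icc]
      omega
    exact_mod_cast this
  calc ∫ ω, (∑ t ∈ I, Z t ω) ^ 2 ∂P = ∫ ω, ∑ s ∈ I, ∑ t ∈ I, Z s ω * Z t ω ∂P := by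
        simp only [sq, Finset.sum_mul_sum]
    _ = ∑ s ∈ I, ∑ t ∈ I, ∫ ω, Z s ω * Z t ω ∂P := by
        rw [integral_finsetSum _ fun s _ => integrable_finsetSum _ fun t _ => iZZ s t]
        exact Finset.sum_congr rfl fun s _ => integral_finsetSum _ fun t _ => iZZ s t
    _ ≤ ∑ s ∈ I, 3 * q ^ 2 := Finset.sum_le_sum fun s _ => key s
    _ = I.card * (3 * q ^ 2) := by rw [Finset.sum_const, nsmul_eq_mul]
    _ ≤ n * (3 * q ^ 2) := by gcongr
    _ = 3 * n * q ^ 2 := by ring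

/-- For a strong white noise with `σ² = E‖u₀‖²` and `μ₄ = E‖u₀‖⁴`, for all `n ≥ 1` and
`1 ≤ j ≤ n-1`, `E[(Σ_{t=j+1}^n (‖u_t‖²‖u_{t-j}‖² - σ⁴))²] ≤ 3 n μ₄²`. -/
theorem sq_sum_norm_prod_centered_le
    {H : Type*} [NormedAddCommGroup H] [InnerProductSpace ℝ H]
    [CompleteSpace H] [SecondCountableTopology H] [MeasurableSpace H] [BorelSpace H]
    {Ω : Type*} [MeasurableSpace Ω] (P : Measure Ω) [IsProbabilityMeasure P]
    (u : ℤ → Ω → H)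
    (hmeas : ∀ t, Measurable (u t))
    (hindep : iIndepFun u P)
    (hident : ∀ t, IdentDistrib (u t) (u 0) P P)
    (hint : Integrable (u 0) P)
    (hmean : ∫ ω, u 0 ω ∂P = 0)
    (hmom4 : Integrable (fun ω => ‖u 0 ω‖ ^ 4) P)
    (σ2 μ4 : ℝ) (hσ2 : σ2 = ∫ ω, ‖u 0 ω‖ ^ 2 ∂P) (hμ4 : μ4 = ∫ ω, ‖u 0 ω‖ ^ 4 ∂P) :
    ∀ n : ℕ, 1 ≤ n → ∀ j : ℕ, 1 ≤ j → j ≤ n - 1 →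
      ∫ ω, (∑ t ∈ Finset.Icc ((j : ℤ) + 1) (n : ℤ),
          (‖u t ω‖ ^ 2 * ‖u (t - j) ω‖ ^ 2 - σ2 ^ 2)) ^ 2 ∂P ≤ 3 * n * μ4 ^ 2 := by
  intro n _ j hj _
  have hid : ∀ t, IdentDistrib (fun ω => ‖u t ω‖ ^ 2) (fun ω => ‖u 0 ω‖ ^ 2) P P := fun t =>
    (hident t).comp (u := fun x : H => ‖x‖ ^ 2) (by fun_prop)
  have hid2 : ∀ t, IdentDistrib (fun ω => (‖u t ω‖ ^ 2) ^ 2) (fun ω => (‖u 0 ω‖ ^ 2) ^ 2) P P :=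
    fun t => (hid t).comp (u := fun x : ℝ => x ^ 2) (by fun_prop)
  have h4 : Integrable (fun ω => (‖u 0 ω‖ ^ 2) ^ 2) P := by
    simpa only [← pow_mul] using hmom4
  have h20 : Integrable (fun ω => ‖u 0 ω‖ ^ 2) P := by
    have := hmeas 0
    have hm : Measurable (fun ω => ‖u 0 ω‖ ^ 2) := by fun_prop
    exact ((memLp_two_iff_integrable_sq hm.aestronglyMeasurable).2 h4).integrable (by norm_num)
  refine aux_real P (fun t ω => ‖u t ω‖ ^ 2) (fun t => ?_) ?_ σ2 μ4
    (fun t => (hid t).integrable_iff.2 h20) (fun t => (hid2 t).integrable_iff.2 h4)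
    (fun t => ?_) (fun t => ?_) n j hj
  · have := hmeas t
    fun_prop
  · exact hindep.comp (fun _ x => ‖x‖ ^ 2) (fun _ => by fun_prop)
  · rw [hσ2]
    exact (hid t).integral_eq
  · rw [hμ4, (hid2 t).integral_eq]
    simp only [← pow_mul]

end
end

section
/- Suppose (u_t)_{t∈ℤ} is a strong white noise in H and set σ² = E‖u₀‖² and μ₄ = E‖u₀‖⁴. For n ≥ 1, a function k : ℝ → [−1,1] and p_n > 0, define C̃_n = n^{-1}·Σ_{j=1}^{n−1} k(j/p_n)²·Σ_{t=j+1}^n ‖u_t‖²·‖u_{t−j}‖². Then Var(C̃_n) ≤ 3·μ₄²·n^{-1}·( Σ_{j=1}^{n−1} k(j/p_n)² )². -/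
open MeasureTheory ProbabilityTheory Filter Finset Topology
open scoped NNReal RealInnerProductSpace

noncomputable section

lemma aux_memLp {Ω : Type*} [MeasurableSpace Ω] {P : Measure Ω} [IsProbabilityMeasure P]
    {X : ℤ → Ω → ℝ} (hm : ∀ t, Measurable (X t)) (hi : iIndepFun X P)
    (h2 : ∀ t, MemLp (X t) 2 P) {a b : ℤ} (hab : a ≠ b) : MemLp (X a * X b) 2 P := by
  rw [memLp_two_iff_integrable_sq ((hm a).mul (hm b)).aestronglyMeasurable]
  have h := (hi.indepFun hab).comp (measurable_id.pow_const 2) (measurable_id.pow_const 2)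
  have := h.integrable_mul (h2 a).integrable_sq (h2 b).integrable_sq
  refine this.congr (ae_of_all _ fun ω => ?_)
  simp [mul_pow]

lemma aux_int {Ω : Type*} [MeasurableSpace Ω] {P : Measure Ω} [IsProbabilityMeasure P]
    {X : ℤ → Ω → ℝ} (hm : ∀ t, Measurable (X t)) (hi : iIndepFun X P)
    {m : ℝ} (h1 : ∀ t, ∫ ω, X t ω ∂P = m)
    {a b : ℤ} (hab : a ≠ b) : ∫ ω, (X a * X b) ω ∂P = m * m := by
  rw [(hi.indepFun hab).integral_mul_eq_mul_integral (hm a).aestronglyMeasurable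
    (hm b).aestronglyMeasurable, h1, h1]

lemma aux_one {Ω : Type*} [MeasurableSpace Ω] {P : Measure Ω} [IsProbabilityMeasure P]
    {X : ℤ → Ω → ℝ} (hm : ∀ t, Measurable (X t)) (hi : iIndepFun X P)
    (h2 : ∀ t, MemLp (X t) 2 P) {m s : ℝ} (h1 : ∀ t, ∫ ω, X t ω ∂P = m)
    (hs : ∀ t, ∫ ω, X t ω ^ 2 ∂P = s) {a b c : ℤ} (hab : a ≠ b) (hac : a ≠ c) (hbc : b ≠ c) :
    cov[X a * X b, X a * X c; P] ≤ s ^ 2 / 2 := by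
  rw [covariance_eq_sub (aux_memLp hm hi h2 hab) (aux_memLp hm hi h2 hac),
    aux_int hm hi h1 hab, aux_int hm hi h1 hac]
  have h := (hi.indepFun_mul_right hm a b c hab hac).comp (measurable_id.pow_const 2) measurable_id
  have h' := h.integral_mul_eq_mul_integral
    ((measurable_id.pow_const 2).comp (hm a)).aestronglyMeasurable
    (measurable_id.comp ((hm b).mul (hm c))).aestronglyMeasurable
  have e : ∫ ω, ((X a * X b) * (X a * X c)) ω ∂P = s * (m * m) := by
    rw [← aux_int hm hi h1 hbc, ← hs a]
    refine Eq.trans (integral_congr_ae (ae_of_all _ fun ω => ?_)) h'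
    simp; ring
  rw [e]
  nlinarith [sq_nonneg (s - m * m), sq_nonneg (m * m)]

lemma aux_same {Ω : Type*} [MeasurableSpace Ω] {P : Measure Ω} [IsProbabilityMeasure P]
    {X : ℤ → Ω → ℝ} (hm : ∀ t, Measurable (X t)) (hi : iIndepFun X P)
    (h2 : ∀ t, MemLp (X t) 2 P) {m s : ℝ} (h1 : ∀ t, ∫ ω, X t ω ∂P = m)
    (hs : ∀ t, ∫ ω, X t ω ^ 2 ∂P = s) {a b : ℤ} (hab : a ≠ b) :
    cov[X a * X b, X a * X b; P] ≤ s ^ 2 := by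
  rw [covariance_eq_sub (aux_memLp hm hi h2 hab) (aux_memLp hm hi h2 hab),
    aux_int hm hi h1 hab]
  have h := (hi.indepFun hab).comp (measurable_id.pow_const 2) (measurable_id.pow_const 2)
  have h' := h.integral_mul_eq_mul_integral
    ((measurable_id.pow_const 2).comp (hm a)).aestronglyMeasurable
    ((measurable_id.pow_const 2).comp (hm b)).aestronglyMeasurable
  have e : ∫ ω, ((X a * X b) * (X a * X b)) ω ∂P = s * s := by
    conv_rhs => rw [← hs a]
    rw [hs a]
    nth_rewrite 1 [← hs a]
    rw [← hs b]
    refine Eq.trans (integral_congr_ae (ae_of_all _ fun ω => ?_)) h'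
    simp; ring
  rw [e]
  nlinarith [sq_nonneg (m * m)]

lemma aux_cov {Ω : Type*} [MeasurableSpace Ω] {P : Measure Ω} [IsProbabilityMeasure P]
    {X : ℤ → Ω → ℝ} (hm : ∀ t, Measurable (X t)) (hi : iIndepFun X P)
    (h2 : ∀ t, MemLp (X t) 2 P) {m s : ℝ} (h1 : ∀ t, ∫ ω, X t ω ∂P = m)
    (hs : ∀ t, ∫ ω, X t ω ^ 2 ∂P = s) {a b c d : ℤ} (hab : a ≠ b) (hcd : c ≠ d) :
    cov[X a * X b, X c * X d; P] ≤ s ^ 2 / 2 * ((if c = a then 1 else 0) +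
      (if d = b then 1 else 0) + (if c = b then 1 else 0) + (if d = a then 1 else 0)) := by
  have hs0 : 0 ≤ s ^ 2 / 2 := by positivity
  by_cases hca : c = a
  · subst hca
    by_cases hdb : d = b
    · subst hdb
      have := aux_same hm hi h2 h1 hs hab
      simp [hab, hab.symm]; linarith
    · have := aux_one hm hi h2 h1 hs hab hcd (Ne.symm hdb)
      simp [hab, hcd.symm, hdb]; linarith
  by_cases hdb : d = b
  · subst hdb
    have := aux_one hm hi h2 h1 hs hab.symm hcd.symm (Ne.symm hca)
    rw [mul_comm (X a), mul_comm (X c)]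
    simp [hab.symm, hcd, hca]; linarith
  by_cases hcb : c = b
  · subst hcb
    by_cases hda : d = a
    · subst hda
      have := aux_same hm hi h2 h1 hs hab
      rw [mul_comm (X c)]
      simp [hca, hab]; linarith
    · have := aux_one hm hi h2 h1 hs hab.symm hcd (Ne.symm hda)
      rw [mul_comm (X a)]
      simp [hca, hdb, hda]; linarith
  by_cases hda : d = a
  · subst hda
    have := aux_one hm hi h2 h1 hs hab hcd.symm (Ne.symm hcb)
    rw [mul_comm (X c)]
    simp [hca, hdb, hcb]; linarith
  have h := (hi.indepFun_mul_mul hm a b c d (Ne.symm hca) (Ne.symm hda) (Ne.symm hcb)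
    (Ne.symm hdb)).covariance_eq_zero (aux_memLp hm hi h2 hab) (aux_memLp hm hi h2 hcd)
  rw [h]
  simp [hca, hdb, hcb, hda]

lemma aux_ind (S : Finset ℤ) (p : ℤ → Prop) [DecidablePred p] (x : ℤ)
    (h : ∀ r, p r → r = x) : ∑ r ∈ S, (if p r then (1 : ℝ) else 0) ≤ 1 := by
  rw [Finset.sum_boole]
  have : (S.filter p).card ≤ 1 := by
    rw [Finset.card_le_one]
    intro a ha b hb
    rw [h a (Finset.mem_filter.1 ha).2, h b (Finset.mem_filter.1 hb).2]
  exact_mod_cast this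

lemma aux_sum {Ω : Type*} [MeasurableSpace Ω] {P : Measure Ω} [IsProbabilityMeasure P]
    {X : ℤ → Ω → ℝ} (hm : ∀ t, Measurable (X t)) (hi : iIndepFun X P)
    (h2 : ∀ t, MemLp (X t) 2 P) {m s : ℝ} (h1 : ∀ t, ∫ ω, X t ω ∂P = m)
    (hs : ∀ t, ∫ ω, X t ω ^ 2 ∂P = s) (n i j : ℕ) (hi1 : 1 ≤ i) (hj1 : 1 ≤ j) :
    cov[fun ω => ∑ t ∈ Finset.Icc ((i : ℤ) + 1) (n : ℤ), X t ω * X (t - i) ω,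
      fun ω => ∑ t ∈ Finset.Icc ((j : ℤ) + 1) (n : ℤ), X t ω * X (t - j) ω; P]
      ≤ 2 * s ^ 2 * n := by
  have key := covariance_fun_sum_fun_sum' (μ := P)
    (s := Finset.Icc ((i : ℤ) + 1) (n : ℤ)) (t := Finset.Icc ((j : ℤ) + 1) (n : ℤ))
    (X := fun t => X t * X (t - i)) (Y := fun t => X t * X (t - j))
    (fun t _ => aux_memLp hm hi h2 (by omega)) (fun t _ => aux_memLp hm hi h2 (by omega))
  simp only [Pi.mul_apply] at key
  rw [key]
  have hs0 : 0 ≤ s ^ 2 / 2 := by positivity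
  have inner : ∀ t ∈ Finset.Icc ((i : ℤ) + 1) (n : ℤ),
      ∑ r ∈ Finset.Icc ((j : ℤ) + 1) (n : ℤ), cov[X t * X (t - i), X r * X (r - j); P]
        ≤ 2 * s ^ 2 := by
    intro t _
    calc _ ≤ ∑ r ∈ Finset.Icc ((j : ℤ) + 1) (n : ℤ), s ^ 2 / 2 * ((if r = t then 1 else 0) +
      (if r - j = t - i then 1 else 0) + (if r = t - i then 1 else 0)
        + (if r - j = t then 1 else 0)) :=
          Finset.sum_le_sum fun r _ => aux_cov hm hi h2 h1 hs (by omega) (by omega)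
      _ ≤ s ^ 2 / 2 * 4 := by
        rw [← Finset.mul_sum]
        refine mul_le_mul_of_nonneg_left ?_ hs0
        simp only [Finset.sum_add_distrib]
        have e1 := aux_ind (Finset.Icc ((j : ℤ) + 1) (n : ℤ)) (fun r => r = t) t (by intros; omega)
        have e2 := aux_ind (Finset.Icc ((j : ℤ) + 1) (n : ℤ)) (fun r => r - j = t - i) (t - i + j)
          (by intros; omega)
        have e3 := aux_ind (Finset.Icc ((j : ℤ) + 1) (n : ℤ)) (fun r => r = t - i) (t - i)
          (by intros; omega)
        have e4 := aux_ind (Finset.Icc ((j : ℤ) + 1) (n : ℤ)) (fun r => r - j = t) (t + j)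
          (by intros; omega)
        linarith
      _ = 2 * s ^ 2 := by ring
  refine (Finset.sum_le_card_nsmul _ _ _ inner).trans ?_
  rw [nsmul_eq_mul, mul_comm]
  refine mul_le_mul_of_nonneg_left ?_ (by positivity)
  have : (Finset.Icc ((i : ℤ) + 1) (n : ℤ)).card ≤ n := by
    rw [Int.card_Icc]; omega
  exact_mod_cast this

/-- Equation (A.2): for a strong white noise with `μ₄ = E‖u₀‖⁴`, the variance of
`C̃_n = n⁻¹ Σ_{j=1}^{n-1} k(j/p_n)² Σ_{t=j+1}^n ‖u_t‖²‖u_{t-j}‖²` satisfies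
`Var(C̃_n) ≤ 3 μ₄² n⁻¹ (Σ_{j=1}^{n-1} k(j/p_n)²)²`. -/
theorem variance_tildeC_le
    {H : Type*} [NormedAddCommGroup H] [InnerProductSpace ℝ H]
    [CompleteSpace H] [SecondCountableTopology H] [MeasurableSpace H] [BorelSpace H]
    {Ω : Type*} [MeasurableSpace Ω] (P : Measure Ω) [IsProbabilityMeasure P]
    (u : ℤ → Ω → H)
    (hmeas : ∀ t, Measurable (u t))
    (hindep : iIndepFun u P)
    (hident : ∀ t, IdentDistrib (u t) (u 0) P P)
    (hint : Integrable (u 0) P)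
    (hmean : ∫ ω, u 0 ω ∂P = 0)
    (hmom4 : Integrable (fun ω => ‖u 0 ω‖ ^ 4) P)
    (μ4 : ℝ) (hμ4 : μ4 = ∫ ω, ‖u 0 ω‖ ^ 4 ∂P)
    (k : ℝ → ℝ) (hk : ∀ x, k x ∈ Set.Icc (-1 : ℝ) 1) (p : ℝ) (hp : 0 < p)
    (n : ℕ) (hn : 1 ≤ n) :
    variance (fun ω => (n : ℝ)⁻¹ * ∑ j ∈ Finset.Icc 1 (n - 1), k ((j : ℝ) / p) ^ 2 *
        ∑ t ∈ Finset.Icc ((j : ℤ) + 1) (n : ℤ), ‖u t ω‖ ^ 2 * ‖u (t - j) ω‖ ^ 2) P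
      ≤ 3 * μ4 ^ 2 * (n : ℝ)⁻¹ * (∑ j ∈ Finset.Icc 1 (n - 1), k ((j : ℝ) / p) ^ 2) ^ 2 := by
  set X : ℤ → Ω → ℝ := fun t ω => ‖u t ω‖ ^ 2 with hX
  have hm : ∀ t, Measurable (X t) := fun t => (hmeas t).norm.pow_const 2
  have hg : Measurable (fun x : H => ‖x‖ ^ 2) := measurable_norm.pow_const 2
  have hg4 : Measurable (fun x : H => ‖x‖ ^ 4) := measurable_norm.pow_const 4
  have hi : iIndepFun X P := hindep.comp (fun _ x => ‖x‖ ^ 2) (fun _ => hg)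
  have h1 : ∀ t, ∫ ω, X t ω ∂P = ∫ ω, X 0 ω ∂P := fun t => ((hident t).comp hg).integral_eq
  have e4 : ∀ t, (fun ω => X t ω ^ 2) = (fun x : H => ‖x‖ ^ 4) ∘ u t := by
    intro t; funext ω; simp only [hX, Function.comp]; ring
  have hs : ∀ t, ∫ ω, X t ω ^ 2 ∂P = μ4 := by
    intro t
    rw [hμ4, e4]
    exact ((hident t).comp hg4).integral_eq
  have h2 : ∀ t, MemLp (X t) 2 P := by
    intro t
    rw [memLp_two_iff_integrable_sq (hm t).aestronglyMeasurable, e4]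
    exact ((hident t).comp hg4).integrable_iff.2 hmom4
  have hn0 : (0 : ℝ) < n := by exact_mod_cast hn
  let F : ℕ → Ω → ℝ := fun j ω => ∑ t ∈ Finset.Icc ((j : ℤ) + 1) (n : ℤ), X t ω * X (t - j) ω
  have hF : ∀ j ∈ Finset.Icc 1 (n - 1), MemLp (F j) 2 P := by
    intro j hj
    have hj := (Finset.mem_Icc.1 hj).1
    exact memLp_finsetSum _ fun t _ => aux_memLp hm hi h2 (by omega)
  have hF' : ∀ j ∈ Finset.Icc 1 (n - 1), MemLp (fun ω => k ((j : ℝ) / p) ^ 2 * F j ω) 2 P :=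
    fun j hj => (hF j hj).const_mul _
  change variance (fun ω => (n : ℝ)⁻¹ * ∑ j ∈ Finset.Icc 1 (n - 1), k ((j : ℝ) / p) ^ 2 * F j ω) P
    ≤ _
  rw [variance_const_mul, ← covariance_self (memLp_finsetSum _ hF').aemeasurable,
    covariance_fun_sum_fun_sum' hF' hF']
  have hb : ∑ i ∈ Finset.Icc 1 (n - 1), ∑ j ∈ Finset.Icc 1 (n - 1),
      cov[fun ω => k ((i : ℝ) / p) ^ 2 * F i ω, fun ω => k ((j : ℝ) / p) ^ 2 * F j ω; P]
      ≤ 2 * μ4 ^ 2 * n * (∑ j ∈ Finset.Icc 1 (n - 1), k ((j : ℝ) / p) ^ 2) ^ 2 := by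
    rw [sq (∑ j ∈ Finset.Icc 1 (n - 1), k ((j : ℝ) / p) ^ 2), Finset.sum_mul_sum, Finset.mul_sum]
    refine Finset.sum_le_sum fun i hii => ?_
    rw [Finset.mul_sum]
    refine Finset.sum_le_sum fun j hj => ?_
    rw [covariance_const_mul_left, covariance_const_mul_right, ← mul_assoc, mul_comm]
    exact mul_le_mul_of_nonneg_right (aux_sum hm hi h2 h1 hs n i j (Finset.mem_Icc.1 hii).1
      (Finset.mem_Icc.1 hj).1) (by positivity)
  refine (mul_le_mul_of_nonneg_left hb (by positivity)).trans ?_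
  set K := (∑ j ∈ Finset.Icc 1 (n - 1), k ((j : ℝ) / p) ^ 2) ^ 2
  have hK : 0 ≤ K := by positivity
  have : (n : ℝ)⁻¹ ^ 2 * (2 * μ4 ^ 2 * n * K) = 2 * μ4 ^ 2 * (n : ℝ)⁻¹ * K := by
    field_simp
  rw [this]
  gcongr
  norm_num

end
end

section
/- Suppose (u_t)_{t∈ℤ} is a strong white noise in H. Fix an integer l ≥ 1, a function k : ℝ → [−1,1] and p > 0, and for an integer t ≥ 2l+3 define U_t = 2·Σ_{j=1}^{l} k(j/p)²·Σ_{s=l+2}^{t−l−1} ⟨u_t,u_s⟩·⟨u_{t−j},u_{s−j}⟩. Then (U_t, F_{t−1}) is a martingale difference sequence: each U_t is integrable and E[ U_t | F_{t−1} ] = 0 almost surely, where F_{t−1} is the σ-algebra generated by {u_r : r ≤ t−1}. -/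
open MeasureTheory ProbabilityTheory Filter Finset Topology
open scoped NNReal RealInnerProductSpace

noncomputable section

variable {H : Type*} [NormedAddCommGroup H] [InnerProductSpace ℝ H]
variable {Ω : Type*} [MeasurableSpace Ω]

/-- `F_t`: the σ-algebra generated by `{u_r : r ≤ t}`. -/
def genF [MeasurableSpace H] (u : ℤ → Ω → H) (t : ℤ) : MeasurableSpace Ω :=
  ⨆ r : {r : ℤ // r ≤ t}, MeasurableSpace.comap (u r) inferInstance

/-- The summand `U_{nt} = 2 Σ_{j=1}^{l} k(j/p)² Σ_{s=l+2}^{t-l-1} ⟨u_t,u_s⟩⟨u_{t-j},u_{s-j}⟩`. -/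
def Umart (u : ℤ → Ω → H) (k : ℝ → ℝ) (p : ℝ) (l : ℕ) (t : ℤ) (ω : Ω) : ℝ :=
  2 * ∑ j ∈ Finset.Icc 1 l, k ((j : ℝ) / p) ^ 2 *
    ∑ s ∈ Finset.Icc ((l : ℤ) + 2) (t - l - 1),
      ⟪u t ω, u s ω⟫ * ⟪u (t - j) ω, u (s - j) ω⟫

/-- For a strong white noise, `(U_t, F_{t-1})` for `t ≥ 2l+3` is a martingale difference
sequence: each `U_t` is integrable and `E[U_t | F_{t-1}] = 0` almost surely. -/
theorem Umart_martingale_difference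
    [CompleteSpace H] [SecondCountableTopology H] [MeasurableSpace H] [BorelSpace H]
    (P : Measure Ω) [IsProbabilityMeasure P]
    (u : ℤ → Ω → H)
    (hmeas : ∀ t, Measurable (u t))
    (hindep : iIndepFun u P)
    (hident : ∀ t, IdentDistrib (u t) (u 0) P P)
    (hint : Integrable (u 0) P)
    (hmean : ∫ ω, u 0 ω ∂P = 0)
    (hmom4 : Integrable (fun ω => ‖u 0 ω‖ ^ 4) P)
    (l : ℕ) (hl : 1 ≤ l)
    (k : ℝ → ℝ) (hk : ∀ x, k x ∈ Set.Icc (-1 : ℝ) 1) (p : ℝ) (hp : 0 < p) :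
    ∀ t : ℤ, 2 * (l : ℤ) + 3 ≤ t →
      Integrable (Umart u k p l t) P ∧
      P[Umart u k p l t | genF u (t - 1)] =ᵐ[P] 0 := by
  intro t ht
  -- fourth moments of every `u r`
  have hm4 : ∀ r, Integrable (fun ω => ‖u r ω‖ ^ 4) P := by
    intro r
    have hφ : Measurable (fun x : H => ‖x‖ ^ 4) := by fun_prop
    exact (((hident r).comp hφ).integrable_iff).2 hmom4
  have hintr : ∀ r, Integrable (u r) P := fun r => (hident r).integrable_iff.2 hint
  have hmeanr : ∀ r, ∫ ω, u r ω ∂P = 0 := fun r => by rw [(hident r).integral_eq, hmean]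
  -- integrability of the products
  have hprod : ∀ a b c d : ℤ,
      Integrable (fun ω => ⟪u a ω, u b ω⟫ * ⟪u c ω, u d ω⟫) P := by
    intro a b c d
    have hA := hmeas a
    have hB := hmeas b
    have hC := hmeas c
    have hD := hmeas d
    refine Integrable.mono' ((((hm4 a).add (hm4 b)).add (hm4 c)).add (hm4 d)) ?_ ?_
    · exact ((hA.inner hB).mul (hC.inner hD)).aestronglyMeasurable
    · refine Eventually.of_forall fun ω => ?_
      have h1 := abs_real_inner_le_norm (u a ω) (u b ω)
      have h2 := abs_real_inner_le_norm (u c ω) (u d ω)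
      have h3 : |⟪u a ω, u b ω⟫| * |⟪u c ω, u d ω⟫|
          ≤ (‖u a ω‖ * ‖u b ω‖) * (‖u c ω‖ * ‖u d ω‖) :=
        mul_le_mul h1 h2 (abs_nonneg _) (by positivity)
      simp only [Real.norm_eq_abs, abs_mul, Pi.add_apply]
      refine h3.trans ?_
      generalize ‖u a ω‖ = x
      generalize ‖u b ω‖ = y
      generalize ‖u c ω‖ = z
      generalize ‖u d ω‖ = w
      nlinarith [sq_nonneg (x * y - z * w), sq_nonneg (x ^ 2 - y ^ 2),
        sq_nonneg (z ^ 2 - w ^ 2), sq_nonneg (x ^ 2), sq_nonneg (y ^ 2), sq_nonneg (z ^ 2),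
        sq_nonneg (w ^ 2)]
  have hU : Integrable (Umart u k p l t) P := by
    unfold Umart
    refine Integrable.const_mul (integrable_finsetSum _ fun j _ => ?_) _
    exact Integrable.const_mul (integrable_finsetSum _ fun s _ => hprod _ _ _ _) _
  refine ⟨hU, ?_⟩
  -- the past-measurable factor
  let V : Ω → H := fun ω => (2 : ℝ) • ∑ j ∈ Finset.Icc 1 l, (k ((j : ℝ) / p) ^ 2) •
    ∑ s ∈ Finset.Icc ((l : ℤ) + 2) (t - l - 1), ⟪u (t - j) ω, u (s - j) ω⟫ • u s ω
  have hUV : Umart u k p l t = fun ω => innerSL ℝ (u t ω) (V ω) := by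
    funext ω
    simp only [Umart, V, innerSL_apply_apply, inner_smul_right, inner_sum]
    congr 1
    refine Finset.sum_congr rfl fun j _ => ?_
    congr 1
    exact Finset.sum_congr rfl fun s _ => mul_comm _ _
  have hum : ∀ r, r ≤ t - 1 → Measurable[genF u (t - 1)] (u r) := by
    intro r hr
    refine Measurable.mono (comap_measurable (u r)) ?_ le_rfl
    exact le_iSup (fun r : {r : ℤ // r ≤ t - 1} =>
      MeasurableSpace.comap (u r) inferInstance) ⟨r, hr⟩
  have hVm : StronglyMeasurable[genF u (t - 1)] V := by
    refine Measurable.stronglyMeasurable ?_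
    refine Measurable.const_smul (Finset.measurable_fun_sum _ fun j hj => ?_) _
    refine Measurable.const_smul (Finset.measurable_fun_sum _ fun s hs => ?_) _
    rw [Finset.mem_Icc] at hj hs
    exact Measurable.smul
      (Measurable.inner (hum _ (by omega)) (hum _ (by omega))) (hum _ (by omega))
  have hle : genF u (t - 1) ≤ (inferInstance : MeasurableSpace Ω) :=
    iSup_le fun r => (hmeas r).comap_le
  have hind : Indep (MeasurableSpace.comap (u t) inferInstance) (genF u (t - 1)) P := by
    have h := indep_iSup_of_disjoint (fun i => (hmeas i).comap_le) hindep
      (S := {t}) (T := Set.Iic (t - 1)) (by simp)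
    have e2 : (⨆ i ∈ Set.Iic (t - 1), MeasurableSpace.comap (u i) inferInstance)
        = genF u (t - 1) := by
      unfold genF
      rw [iSup_subtype]
      rfl
    rw [e2] at h
    simpa using h
  have hce : P[u t | genF u (t - 1)] =ᵐ[P] fun _ => ∫ ω, u t ω ∂P :=
    condExp_indep_eq (hmeas t).comap_le hle
      (comap_measurable (u t)).stronglyMeasurable hind
  have hpull := condExp_bilin_of_stronglyMeasurable_right (innerSL ℝ) (μ := P) hVm
    (by rw [← hUV]; exact hU) (hintr t)
  rw [hUV]
  filter_upwards [hpull, hce] with ω h1 h2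
  rw [h1, h2, hmeanr]
  simp

end
end

section
/- Suppose (u_t)_{t∈ℤ} is a strong white noise in H. Fix integers n and l with 1 ≤ l and n ≥ 2l+3, a function k : ℝ → [−1,1] and p > 0, and define U_n = n^{-1}·Σ_{t=2l+3}^n U_t with U_t = 2·Σ_{j=1}^{l} k(j/p)²·Σ_{s=l+2}^{t−l−1} ⟨u_t,u_s⟩·⟨u_{t−j},u_{s−j}⟩. Then E[U_n²] = 2·( E[⟨u₀,u₀′⟩²] )²·n^{-2}·(n−2l−2)·(n−2l−1)·Σ_{j=1}^{l} k(j/p)⁴, where u₀′ is an H-valued random element independent of u₀ with the same distribution (so that E[⟨u₀,u₀′⟩²] = ‖C(0)‖₂², the squared Hilbert–Schmidt norm of the covariance operator C(0) = E[u₀ ⊗ u₀]). -/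
open MeasureTheory ProbabilityTheory Filter Finset Topology
open scoped NNReal RealInnerProductSpace

noncomputable section

variable {H : Type*} [NormedAddCommGroup H] [InnerProductSpace ℝ H]
variable {Ω : Type*} [MeasurableSpace Ω]

section aux

theorem aux_inner_zero
    [CompleteSpace H] [SecondCountableTopology H] [MeasurableSpace H] [BorelSpace H]
    (P : Measure Ω) [IsProbabilityMeasure P] (X W : Ω → H)
    (hX : Measurable X) (hW : Measurable W) (hXW : IndepFun X W P)
    (hint : Integrable X P) (hmean : ∫ ω, X ω ∂P = 0) :
    ∫ ω, ⟪X ω, W ω⟫ ∂P = 0 := by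
  have hmap := hXW.symm.map_prod_eq_prod_map_map hW.aemeasurable hX.aemeasurable
  have h1 : ∫ ω, ⟪X ω, W ω⟫ ∂P = ∫ z : H × H, ⟪z.2, z.1⟫ ∂((P.map W).prod (P.map X)) := by
    rw [← hmap, integral_map (hW.prodMk hX).aemeasurable]
    exact (Measurable.inner measurable_snd measurable_fst).aestronglyMeasurable
  rw [h1]
  have : IsProbabilityMeasure (P.map W) := Measure.isProbabilityMeasure_map hW.aemeasurable
  have : IsProbabilityMeasure (P.map X) := Measure.isProbabilityMeasure_map hX.aemeasurable
  by_cases hi : Integrable (fun z : H × H => ⟪z.2, z.1⟫) ((P.map W).prod (P.map X))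
  · rw [integral_prod _ hi]
    have h2 : ∀ y : H, ∫ x, ⟪x, y⟫ ∂(P.map X) = 0 := by
      intro y
      rw [integral_map hX.aemeasurable
        (Measurable.inner (f := fun x : H => x) (g := fun _ => y)
          measurable_id measurable_const).aestronglyMeasurable]
      simp_rw [real_inner_comm y]
      rw [integral_inner hint, hmean, inner_zero_right]
    simp [h2]
  · exact integral_undef hi

theorem aux_meas
    [SecondCountableTopology H] [MeasurableSpace H] [BorelSpace H] {Ω : Type*}
    (m : MeasurableSpace Ω)
    (b c d e f g h : Ω → H) (hb : Measurable b) (hc : Measurable c) (hd : Measurable d)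
    (he : Measurable e) (hf : Measurable f) (hg : Measurable g) (hh : Measurable h) :
    Measurable (fun ω => (⟪c ω, d ω⟫ * (⟪e ω, f ω⟫ * ⟪g ω, h ω⟫)) • b ω) :=
  ((hc.inner hd).mul ((he.inner hf).mul (hg.inner hh))).smul hb

theorem aux_zero8
    [CompleteSpace H] [SecondCountableTopology H] [MeasurableSpace H] [BorelSpace H]
    (P : Measure Ω) [IsProbabilityMeasure P] (u : ℤ → Ω → H)
    (hmeas : ∀ t, Measurable (u t)) (hindep : iIndepFun u P)
    (hint : ∀ t, Integrable (u t) P) (hmean : ∀ t, ∫ ω, u t ω ∂P = 0)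
    (a b c d e f g h : ℤ) (hb : b ≠ a) (hc : c ≠ a) (hd : d ≠ a) (he : e ≠ a) (hf : f ≠ a)
    (hg : g ≠ a) (hh : h ≠ a) :
    ∫ ω, ⟪u a ω, u b ω⟫ * ⟪u c ω, u d ω⟫ * (⟪u e ω, u f ω⟫ * ⟪u g ω, u h ω⟫) ∂P = 0 := by
  have hle : ∀ i, MeasurableSpace.comap (u i) inferInstance ≤ ‹MeasurableSpace Ω› :=
    fun i => (hmeas i).comap_le
  have hI := indep_iSup_of_disjoint hle hindep.iIndep
    (S := {a}) (T := {a}ᶜ) disjoint_compl_right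
  have hu : ∀ i, i ≠ a → Measurable[⨆ i ∈ ({a}ᶜ : Set ℤ),
      MeasurableSpace.comap (u i) inferInstance] (u i) := by
    intro i hi
    rw [measurable_iff_comap_le]
    exact le_iSup₂_of_le i hi le_rfl
  have hWm := aux_meas _ _ _ _ _ _ _ _ (hu b hb) (hu c hc) (hu d hd) (hu e he) (hu f hf)
    (hu g hg) (hu h hh)
  have hXW : IndepFun (u a)
      (fun ω => (⟪u c ω, u d ω⟫ * (⟪u e ω, u f ω⟫ * ⟪u g ω, u h ω⟫)) • u b ω) P := by
    rw [IndepFun_iff_Indep]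
    refine indep_of_indep_of_le_left (indep_of_indep_of_le_right hI ?_) ?_
    · exact measurable_iff_comap_le.1 hWm
    · exact le_iSup₂_of_le a rfl le_rfl
  have := aux_inner_zero P (u a) _ (hmeas a)
    (aux_meas _ _ _ _ _ _ _ _ (hmeas b) (hmeas c) (hmeas d) (hmeas e) (hmeas f)
      (hmeas g) (hmeas h)) hXW (hint a) (hmean a)
  rw [← this]
  congr 1
  ext ω
  rw [real_inner_smul_right]
  ring

/-- the elementary term -/
def auxX (u : ℤ → Ω → H) (t : ℤ) (j : ℕ) (s : ℤ) (ω : Ω) : ℝ :=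
  ⟪u t ω, u s ω⟫ * ⟪u (t - j) ω, u (s - j) ω⟫

theorem aux_orth
    [CompleteSpace H] [SecondCountableTopology H] [MeasurableSpace H] [BorelSpace H]
    (P : Measure Ω) [IsProbabilityMeasure P] (u : ℤ → Ω → H)
    (hmeas : ∀ t, Measurable (u t)) (hindep : iIndepFun u P)
    (hint : ∀ t, Integrable (u t) P) (hmean : ∀ t, ∫ ω, u t ω ∂P = 0)
    (t t' s s' : ℤ) (j j' : ℕ) (hj : 1 ≤ j) (hj' : 1 ≤ j') (hs : s < t - j) (hs' : s' < t' - j')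
    (hlt : t' < t ∨ (t = t' ∧ j < j') ∨ (t = t' ∧ j = j' ∧ s' < s)) :
    ∫ ω, auxX u t j s ω * auxX u t' j' s' ω ∂P = 0 := by
  unfold auxX
  rcases hlt with h | ⟨rfl, h⟩ | ⟨rfl, rfl, h⟩
  · exact aux_zero8 P u hmeas hindep hint hmean _ _ _ _ _ _ _ _ (by lia) (by lia) (by lia)
      (by lia) (by lia) (by lia) (by lia)
  · rw [← aux_zero8 P u hmeas hindep hint hmean (t - j) (s - j) t s t s' (t - j') (s' - j')
      (by lia) (by lia) (by lia) (by lia) (by lia) (by lia) (by lia)]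
    congr 1; ext ω; ring
  · rw [← aux_zero8 P u hmeas hindep hint hmean s t (t - j) (s - j) t s' (t - j) (s' - j)
      (by lia) (by lia) (by lia) (by lia) (by lia) (by lia) (by lia)]
    congr 1; ext ω; rw [real_inner_comm (u t ω) (u s ω)]

theorem aux_pair
    [CompleteSpace H] [SecondCountableTopology H] [MeasurableSpace H] [BorelSpace H]
    (P : Measure Ω) [IsProbabilityMeasure P] (u : ℤ → Ω → H)
    (hmeas : ∀ t, Measurable (u t)) (hindep : iIndepFun u P)
    (hident : ∀ t, IdentDistrib (u t) (u 0) P P)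
    (hmom : ∀ t, Integrable (fun ω => ‖u t ω‖ ^ 2) P) (a b : ℤ) (hab : a ≠ b) :
    Integrable (fun ω => ⟪u a ω, u b ω⟫ ^ 2) P ∧
    ∫ ω, ⟪u a ω, u b ω⟫ ^ 2 ∂P = ∫ ω, ⟪u 0 ω, u 1 ω⟫ ^ 2 ∂P := by
  constructor
  · have hi : IndepFun (fun ω => ‖u a ω‖ ^ 2) (fun ω => ‖u b ω‖ ^ 2) P :=
      (hindep.indepFun hab).comp (φ := fun x => ‖x‖ ^ 2) (ψ := fun x => ‖x‖ ^ 2)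
        (by fun_prop) (by fun_prop)
    have := hi.integrable_mul (hmom a) (hmom b)
    refine this.mono' (((hmeas a).inner (hmeas b)).pow_const 2).aestronglyMeasurable ?_
    refine Eventually.of_forall fun ω => ?_
    simp only [Pi.mul_apply, norm_pow, ← mul_pow]
    exact pow_le_pow_left₀ (norm_nonneg _) (norm_inner_le_norm _ _) 2
  · have h1 : IdentDistrib (fun ω => (u a ω, u b ω)) (fun ω => (u 0 ω, u 1 ω)) P P :=
      (hident a).prodMk ((hident b).trans (hident 1).symm) (hindep.indepFun hab)
        (hindep.indepFun (by norm_num))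
    have h2 := h1.comp (u := fun z : H × H => ⟪z.1, z.2⟫ ^ 2)
      ((measurable_fst.inner measurable_snd).pow_const 2)
    exact h2.integral_eq

theorem aux_sq
    [CompleteSpace H] [SecondCountableTopology H] [MeasurableSpace H] [BorelSpace H]
    (P : Measure Ω) [IsProbabilityMeasure P] (u : ℤ → Ω → H)
    (hmeas : ∀ t, Measurable (u t)) (hindep : iIndepFun u P)
    (hident : ∀ t, IdentDistrib (u t) (u 0) P P)
    (hmom : ∀ t, Integrable (fun ω => ‖u t ω‖ ^ 2) P)
    (t s : ℤ) (j : ℕ) (hj : 1 ≤ j) (hs : s < t - j) :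
    MemLp (auxX u t j s) 2 P ∧
    ∫ ω, auxX u t j s ω * auxX u t j s ω ∂P = (∫ ω, ⟪u 0 ω, u 1 ω⟫ ^ 2 ∂P) ^ 2 := by
  have hi := (hindep.indepFun_prodMk_prodMk hmeas t s (t - j) (s - j) (by lia) (by lia) (by lia)
    (by lia)).comp (φ := fun z : H × H => ⟪z.1, z.2⟫ ^ 2) (ψ := fun z : H × H => ⟪z.1, z.2⟫ ^ 2)
      ((measurable_fst.inner measurable_snd).pow_const 2)
      ((measurable_fst.inner measurable_snd).pow_const 2)
  obtain ⟨i1, e1⟩ := aux_pair P u hmeas hindep hident hmom t s (by lia)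
  obtain ⟨i2, e2⟩ := aux_pair P u hmeas hindep hident hmom (t - j) (s - j) (by lia)
  constructor
  · rw [memLp_two_iff_integrable_sq]
    · refine (hi.integrable_mul i1 i2).congr (Eventually.of_forall fun ω => ?_)
      simp [auxX, mul_pow]
    · exact (((hmeas _).inner (hmeas _)).mul ((hmeas _).inner (hmeas _))).aestronglyMeasurable
  · have := hi.integral_fun_mul_eq_mul_integral i1.aestronglyMeasurable i2.aestronglyMeasurable
    rw [sq]
    nth_rewrite 1 [← e1]
    rw [← e2]
    refine Eq.trans ?_ this
    congr 1
    ext ω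
    simp only [auxX, Function.comp]
    ring

theorem aux_sum_sq {ι : Type*} (P : Measure Ω) (I : Finset ι) (c : ι → ℝ)
    (X : ι → Ω → ℝ) (v : ℝ) (hL : ∀ i ∈ I, MemLp (X i) 2 P)
    (hv : ∀ i ∈ I, ∫ ω, X i ω * X i ω ∂P = v)
    (ho : ∀ i ∈ I, ∀ j ∈ I, i ≠ j → ∫ ω, X i ω * X j ω ∂P = 0) :
    ∫ ω, (∑ i ∈ I, c i * X i ω) ^ 2 ∂P = ∑ i ∈ I, c i ^ 2 * v := by
  have hint : ∀ i ∈ I, ∀ j ∈ I, Integrable (fun ω => c i * X i ω * (c j * X j ω)) P := by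
    intro i hi j hj
    exact ((hL i hi).const_mul (c i)).integrable_mul ((hL j hj).const_mul (c j))
  simp_rw [sq (∑ i ∈ I, _), Finset.sum_mul_sum]
  rw [integral_finsetSum _ fun i hi => integrable_finsetSum _ fun j hj => hint i hi j hj]
  refine Finset.sum_congr rfl fun i hi => ?_
  rw [integral_finsetSum _ fun j hj => hint i hi j hj]
  have hf : ∀ j, ∫ ω, c i * X i ω * (c j * X j ω) ∂P = c i * c j * ∫ ω, X i ω * X j ω ∂P := by
    intro j
    rw [← integral_const_mul]
    congr 1; ext ω; ring
  simp_rw [hf]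
  rw [Finset.sum_eq_single_of_mem i hi]
  · rw [hv i hi]; ring
  · intro j hj hji
    rw [ho i hi j hj hji.symm, mul_zero]

theorem aux_count (l m : ℕ) :
    ∑ t ∈ Finset.Icc (2 * (l : ℤ) + 3) (2 * l + 2 + m),
      ((Finset.Icc ((l : ℤ) + 2) (t - l - 1)).card : ℝ) = m * (m + 1) / 2 := by
  induction m with
  | zero => simp
  | succ m ih =>
    have : Finset.Icc (2 * (l : ℤ) + 3) (2 * l + 2 + (m + 1 : ℕ))
        = insert (2 * (l : ℤ) + 2 + (m + 1 : ℕ)) (Finset.Icc (2 * (l : ℤ) + 3) (2 * l + 2 + m)) := by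
      ext x; simp only [Finset.mem_Icc, Finset.mem_insert]; lia
    rw [this, Finset.sum_insert (by simp only [Finset.mem_Icc]; lia), ih, Int.card_Icc]
    have : (2 * (l : ℤ) + 2 + (m + 1 : ℕ) - l - 1 + 1 - (l + 2)).toNat = m + 1 := by lia
    rw [this]; push_cast; ring

end aux

/-- Equation (A.6): for a strong white noise, with `U_n = n⁻¹ Σ_{t=2l+3}^n U_t`,
`E U_n² = 2 ‖C(0)‖₂⁴ n⁻² (n-2l-2)(n-2l-1) Σ_{j=1}^{l} k(j/p)⁴`, where
`‖C(0)‖₂² = E⟨u₀,u₀'⟩²` and the independent copy `u₀'` of `u₀` is realised by `u 1`. -/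
theorem integral_sq_Umart_sum
    [CompleteSpace H] [SecondCountableTopology H] [MeasurableSpace H] [BorelSpace H]
    (P : Measure Ω) [IsProbabilityMeasure P]
    (u : ℤ → Ω → H)
    (hmeas : ∀ t, Measurable (u t))
    (hindep : iIndepFun u P)
    (hident : ∀ t, IdentDistrib (u t) (u 0) P P)
    (hint : Integrable (u 0) P)
    (hmean : ∫ ω, u 0 ω ∂P = 0)
    (hmom4 : Integrable (fun ω => ‖u 0 ω‖ ^ 4) P)
    (n l : ℕ) (hl : 1 ≤ l) (hn : 2 * l + 3 ≤ n)
    (k : ℝ → ℝ) (hk : ∀ x, k x ∈ Set.Icc (-1 : ℝ) 1) (p : ℝ) (hp : 0 < p) :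
    ∫ ω, ((n : ℝ)⁻¹ * ∑ t ∈ Finset.Icc (2 * (l : ℤ) + 3) (n : ℤ), Umart u k p l t ω) ^ 2 ∂P
      = 2 * (∫ ω, ⟪u 0 ω, u 1 ω⟫ ^ 2 ∂P) ^ 2 * ((n : ℝ) ^ 2)⁻¹ *
        ((n : ℝ) - 2 * l - 2) * ((n : ℝ) - 2 * l - 1) *
        ∑ j ∈ Finset.Icc 1 l, k ((j : ℝ) / p) ^ 4 := by
  have hints : ∀ t, Integrable (u t) P := fun t => (hident t).integrable_iff.2 hint
  have hmeans : ∀ t, ∫ ω, u t ω ∂P = 0 := fun t => (hident t).integral_eq.trans hmean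
  have hmom0 : Integrable (fun ω => ‖u 0 ω‖ ^ 2) P := by
    refine ((integrable_const (1 : ℝ)).add hmom4).mono'
      ((hmeas 0).norm.pow_const 2).aestronglyMeasurable (Eventually.of_forall fun ω => ?_)
    simp only [Pi.add_apply, Real.norm_eq_abs, abs_pow, abs_norm]
    nlinarith [sq_nonneg (‖u 0 ω‖ ^ 2 - 1), sq_nonneg (‖u 0 ω‖ ^ 2)]
  have hmom : ∀ t, Integrable (fun ω => ‖u t ω‖ ^ 2) P := by
    intro t
    have h2 := (hident t).comp (u := fun x : H => ‖x‖ ^ 2) (by fun_prop)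
    exact h2.integrable_iff.2 hmom0
  set σ := ∫ ω, ⟪u 0 ω, u 1 ω⟫ ^ 2 ∂P with hσ
  let I : Finset (Σ _ : ℤ, ℕ × ℤ) := (Finset.Icc (2 * (l : ℤ) + 3) (n : ℤ)).sigma
    (fun t => Finset.Icc 1 l ×ˢ Finset.Icc ((l : ℤ) + 2) (t - l - 1))
  have hmem : ∀ i ∈ I, 1 ≤ i.2.1 ∧ i.2.2 < i.1 - i.2.1 := by
    rintro ⟨t, j, s⟩ hi
    simp only [I, Finset.mem_sigma, Finset.mem_product, Finset.mem_Icc] at hi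
    dsimp only
    lia
  have key := aux_sum_sq P I (fun i => (n : ℝ)⁻¹ * (2 * k ((i.2.1 : ℝ) / p) ^ 2))
    (fun i => auxX u i.1 i.2.1 i.2.2) (σ ^ 2)
    (fun i hi => (aux_sq P u hmeas hindep hident hmom i.1 i.2.2 i.2.1
      (hmem i hi).1 (hmem i hi).2).1)
    (fun i hi => (aux_sq P u hmeas hindep hident hmom i.1 i.2.2 i.2.1
      (hmem i hi).1 (hmem i hi).2).2)
    (by
      rintro ⟨t, j, s⟩ hi ⟨t', j', s'⟩ hi' hne
      have h1 := hmem _ hi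
      have h2 := hmem _ hi'
      dsimp only at h1 h2 ⊢
      by_cases hlt : t' < t ∨ (t = t' ∧ j < j') ∨ (t = t' ∧ j = j' ∧ s' < s)
      · exact aux_orth P u hmeas hindep hints hmeans t t' s s' j j' h1.1 h2.1 h1.2 h2.2 hlt
      · have hlt' : t < t' ∨ (t' = t ∧ j' < j) ∨ (t' = t ∧ j' = j ∧ s < s') := by
          by_contra hcon
          apply hne
          have e1 : t = t' := by lia
          have e2 : j = j' := by lia
          have e3 : s = s' := by lia
          subst e1 e2 e3
          rfl
        rw [← aux_orth P u hmeas hindep hints hmeans t' t s' s j' j h2.1 h1.1 h2.2 h1.2 hlt']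
        congr 1; ext ω; ring)
  have hL : ∀ ω, (n : ℝ)⁻¹ * ∑ t ∈ Finset.Icc (2 * (l : ℤ) + 3) (n : ℤ), Umart u k p l t ω
      = ∑ i ∈ I, (n : ℝ)⁻¹ * (2 * k ((i.2.1 : ℝ) / p) ^ 2) * auxX u i.1 i.2.1 i.2.2 ω := by
    intro ω
    rw [Finset.sum_sigma, Finset.mul_sum]
    refine Finset.sum_congr rfl fun t _ => ?_
    rw [Finset.sum_product, Umart, Finset.mul_sum, Finset.mul_sum]
    refine Finset.sum_congr rfl fun j _ => ?_
    rw [Finset.mul_sum, Finset.mul_sum, Finset.mul_sum]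
    refine Finset.sum_congr rfl fun s _ => ?_
    simp only [auxX]
    ring
  simp_rw [hL]
  rw [key, Finset.sum_sigma]
  simp only [Finset.sum_product, Finset.sum_const, nsmul_eq_mul]
  obtain ⟨m, rfl⟩ : ∃ m, n = 2 * l + 2 + m := ⟨n - (2 * l + 2), by lia⟩
  have hc := aux_count l m
  have hcast : ((2 * l + 2 + m : ℕ) : ℤ) = 2 * (l : ℤ) + 2 + m := by push_cast; ring
  rw [hcast]
  have hsum : ∀ t : ℤ, ∑ j ∈ Finset.Icc 1 l,
      ((Finset.Icc ((l : ℤ) + 2) (t - l - 1)).card : ℝ) *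
        ((((2 * l + 2 + m : ℕ) : ℝ)⁻¹ * (2 * k ((j : ℝ) / p) ^ 2)) ^ 2 * σ ^ 2)
      = ((Finset.Icc ((l : ℤ) + 2) (t - l - 1)).card : ℝ) *
        (4 * (((2 * l + 2 + m : ℕ) : ℝ) ^ 2)⁻¹ * σ ^ 2 *
          ∑ j ∈ Finset.Icc 1 l, k ((j : ℝ) / p) ^ 4) := by
    intro t
    rw [Finset.mul_sum, Finset.mul_sum]
    refine Finset.sum_congr rfl fun j _ => ?_
    rw [← inv_pow]
    ring
  simp_rw [hsum]
  rw [← Finset.sum_mul, hc]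
  generalize ∑ j ∈ Finset.Icc 1 l, k ((j : ℝ) / p) ^ 4 = K
  have e1 : ((2 * l + 2 + m : ℕ) : ℝ) - 2 * l - 2 = m := by push_cast; ring
  have e2 : ((2 * l + 2 + m : ℕ) : ℝ) - 2 * l - 1 = m + 1 := by push_cast; ring
  rw [e1, e2]
  ring

end
end

section
/- Suppose (u_t)_{t∈ℤ} is a strong white noise in H. Then there exists a constant C > 0, depending only on the distribution of u₀, such that for all integers j ≥ 1 and a ≤ b, E[ ( Σ_{s=a}^{b} Σ_{r=a}^{b} ⟨u_s,u_r⟩·⟨u_{s−j},u_{r−j}⟩ )² ] ≤ C·(b−a+1)². (The double sum inside is the squared Hilbert–Schmidt norm ‖H‖₂² of the operator H = Σ_{s=a}^{b} u_s ⊗ u_{s−j}, so the claim is E‖H‖₂⁴ = O((b−a+1)²).) -/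
open MeasureTheory ProbabilityTheory Filter Finset Topology
open scoped NNReal RealInnerProductSpace

noncomputable section


section Helpers
open scoped TensorProduct

variable {H : Type*} [NormedAddCommGroup H] [InnerProductSpace ℝ H]

/-- The double sum (squared Hilbert-Schmidt norm). -/
def auxQ (I : Finset ℤ) (j : ℤ) (w : ℤ → H) : ℝ :=
  ∑ s ∈ I, ∑ r ∈ I, ⟪w s, w r⟫ * ⟪w (s - j), w (r - j)⟫

/-- The cross term. -/
def auxV (I : Finset ℤ) (j n : ℤ) (w : ℤ → H) : H :=
  ∑ s ∈ I, ⟪w (s - j), w (n - j)⟫ • w s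

/-- The tensor sum. -/
def auxS (I : Finset ℤ) (j : ℤ) (w : ℤ → H) : H ⊗[ℝ] H :=
  ∑ s ∈ I, w s ⊗ₜ[ℝ] w (s - j)

lemma auxQ_eq (I : Finset ℤ) (j : ℤ) (w : ℤ → H) :
    auxQ I j w = ‖auxS I j w‖ ^ 2 := by
  rw [← real_inner_self_eq_norm_sq]
  simp only [auxQ, auxS, sum_inner, inner_sum, TensorProduct.inner_tmul]
  exact Finset.sum_comm

lemma auxV_eq (I : Finset ℤ) (j n : ℤ) (w : ℤ → H) :
    ⟪auxV I j n w, w n⟫ = ⟪auxS I j w, w n ⊗ₜ[ℝ] w (n - j)⟫ := by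
  simp only [auxV, auxS, sum_inner, TensorProduct.inner_tmul, inner_smul_left]
  refine Finset.sum_congr rfl fun s _ => ?_
  simp [mul_comm]

lemma auxQ_insert (I : Finset ℤ) (j n : ℤ) (hn : n ∉ I) (w : ℤ → H) :
    auxQ (insert n I) j w = auxQ I j w + 2 * ⟪auxV I j n w, w n⟫
      + (‖w n‖ * ‖w (n - j)‖) ^ 2 := by
  rw [auxV_eq, auxQ_eq, auxQ_eq]
  have : auxS (insert n I) j w = auxS I j w + w n ⊗ₜ[ℝ] w (n - j) := by
    simp only [auxS]; rw [Finset.sum_insert hn, add_comm]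
  rw [this, norm_add_sq_real, TensorProduct.norm_tmul]

lemma auxV_sq (I : Finset ℤ) (j n : ℤ) (w : ℤ → H) :
    ⟪auxV I j n w, w n⟫ ^ 2 ≤ auxQ I j w * (‖w n‖ * ‖w (n - j)‖) ^ 2 := by
  rw [auxV_eq, auxQ_eq, ← TensorProduct.norm_tmul (𝕜 := ℝ) (w n) (w (n - j)), ← mul_pow, ← sq_abs]
  exact pow_le_pow_left₀ (abs_nonneg _)
    (abs_real_inner_le_norm (auxS I j w) (w n ⊗ₜ[ℝ] w (n - j))) 2

lemma auxQ_nonneg (I : Finset ℤ) (j : ℤ) (w : ℤ → H) : 0 ≤ auxQ I j w := by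
  rw [auxQ_eq]; positivity

lemma aux_real_s15 {q L x : ℝ} (hq : 0 ≤ q) (hx : 0 ≤ x) (h : L ^ 2 ≤ q * x) (c : ℝ) (hc : 0 < c) :
    (q + 2 * L + x) ^ 2 ≤ q ^ 2 + 4 * (q * L) + c⁻¹ * q ^ 2 + (16 * c + 3) * x ^ 2 := by
  have h1 : |L| ≤ (q + x) / 2 := by
    apply abs_le_of_sq_le_sq _ (by positivity)
    nlinarith [sq_nonneg (q - x)]
  have h2 : L * x ≤ (q + x) / 2 * x := mul_le_mul_of_nonneg_right ((le_abs_self L).trans h1) hx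
  have h3 : 8 * (q * x) ≤ c⁻¹ * q ^ 2 + 16 * c * x ^ 2 := by
    have : c⁻¹ * q ^ 2 + 16 * c * x ^ 2 - 8 * (q * x) = c⁻¹ * (q - 4 * c * x) ^ 2 := by
      field_simp; ring
    have : 0 ≤ c⁻¹ * (q - 4 * c * x) ^ 2 := by positivity
    linarith
  nlinarith

lemma aux_absL {q L x : ℝ} (hq : 0 ≤ q) (hx : 0 ≤ x) (h : L ^ 2 ≤ q * x) :
    |q * L| ≤ q ^ 2 + x ^ 2 := by
  have h1 : |L| ≤ (q + x) / 2 := by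
    apply abs_le_of_sq_le_sq _ (by positivity)
    nlinarith [sq_nonneg (q - x)]
  rw [abs_mul, abs_of_nonneg hq]
  nlinarith [mul_le_mul_of_nonneg_left h1 hq, sq_nonneg (q - x)]

lemma aux_zero [CompleteSpace H] [SecondCountableTopology H] [MeasurableSpace H] [BorelSpace H]
    {Ω : Type*} [MeasurableSpace Ω] (P : Measure Ω) [IsProbabilityMeasure P]
    (W U : Ω → H) (hW : Measurable W) (hU : Measurable U) (hind : IndepFun W U P)
    (hint : Integrable U P) (h0 : ∫ ω, U ω ∂P = 0) : ∫ ω, ⟪W ω, U ω⟫ ∂P = 0 := by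
  have hm := (indepFun_iff_map_prod_eq_prod_map_map hW.aemeasurable hU.aemeasurable).1 hind
  have hmeas : Measurable (fun p : H × H => ⟪p.1, p.2⟫) := measurable_fst.inner measurable_snd
  have e : ∫ ω, ⟪W ω, U ω⟫ ∂P = ∫ p, ⟪p.1, p.2⟫ ∂((P.map W).prod (P.map U)) := by
    rw [← hm, integral_map (hW.prodMk hU).aemeasurable hmeas.aestronglyMeasurable]
  rw [e]
  have := Measure.isProbabilityMeasure_map (μ := P) hW.aemeasurable
  have := Measure.isProbabilityMeasure_map (μ := P) hU.aemeasurable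
  by_cases hi : Integrable (fun p : H × H => ⟪p.1, p.2⟫) ((P.map W).prod (P.map U))
  · rw [integral_prod _ hi]
    have hU' : Integrable (fun x : H => x) (P.map U) :=
      (integrable_map_measure aestronglyMeasurable_id hU.aemeasurable).2 hint
    have hz : ∫ x : H, x ∂(P.map U) = 0 := by
      have := integral_map (μ := P) (f := fun x : H => x) hU.aemeasurable aestronglyMeasurable_id
      rw [this]; exact h0
    have : ∀ c : H, ∫ x : H, ⟪c, x⟫ ∂(P.map U) = 0 := fun c => by
      rw [integral_inner hU', hz, inner_zero_right]
    simp [this]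
  · exact integral_undef hi

lemma aux_measQ [SecondCountableTopology H] [MeasurableSpace H] [BorelSpace H]
    {Ω : Type*} [MeasurableSpace Ω] (I : Finset ℤ) (j : ℤ) (w : Ω → ℤ → H)
    (hw : ∀ t, Measurable fun ω => w ω t) : Measurable fun ω => auxQ I j (w ω) := by
  unfold auxQ
  exact Finset.measurable_sum _ fun s _ => Finset.measurable_sum _ fun r _ =>
    ((hw s).inner (hw r)).mul ((hw _).inner (hw _))

lemma aux_measV [SecondCountableTopology H] [MeasurableSpace H] [BorelSpace H]
    {Ω : Type*} [MeasurableSpace Ω] (I : Finset ℤ) (j n : ℤ) (w : Ω → ℤ → H)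
    (hw : ∀ t, Measurable fun ω => w ω t) : Measurable fun ω => auxV I j n (w ω) := by
  unfold auxV
  exact Finset.measurable_sum _ fun s _ => ((hw _).inner (hw _)).smul (hw s)

lemma aux_cross [CompleteSpace H] [SecondCountableTopology H] [MeasurableSpace H] [BorelSpace H]
    {Ω : Type*} [MeasurableSpace Ω] (P : Measure Ω) [IsProbabilityMeasure P]
    (u : ℤ → Ω → H) (hmeas : ∀ t, Measurable (u t)) (hindep : iIndepFun u P)
    (a n j : ℤ) (hj : 1 ≤ j) (han : a ≤ n)
    (hint : Integrable (u n) P) (hmean : ∫ ω, u n ω ∂P = 0) :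
    ∫ ω, auxQ (Finset.Ico a n) j (fun t => u t ω)
      * ⟪auxV (Finset.Ico a n) j n (fun t => u t ω), u n ω⟫ ∂P = 0 := by
  classical
  set T : Finset ℤ := Finset.Ico (a - j) n with hT
  let e : (T → H) → ℤ → H := fun v t => if h : t ∈ T then v ⟨t, h⟩ else 0
  have he : ∀ t, Measurable fun v => e v t := by
    intro t
    by_cases h : t ∈ T
    · simpa [e, h] using measurable_pi_apply (⟨t, h⟩ : T)
    · simp [e, h]
  let F : (T → H) → H := fun v =>
    auxQ (Finset.Ico a n) j (e v) • auxV (Finset.Ico a n) j n (e v)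
  have hF : Measurable F := (aux_measQ _ _ e he).smul (aux_measV _ _ _ e he)
  let R : Ω → (T → H) := fun ω i => u i ω
  have hR : Measurable R := measurable_pi_lambda _ fun i => hmeas i
  have hind : IndepFun (F ∘ R) (u n) P := by
    have h1 := hindep.indepFun_finset T {n} (by simp [hT]) hmeas
    exact h1.comp (φ := F) (ψ := fun v : (({n} : Finset ℤ) → H) => v ⟨n, by simp⟩)
      hF (measurable_pi_apply _)
  have key := aux_zero P (F ∘ R) (u n) (hF.comp hR) (hmeas n) hind hint hmean
  rw [← key]
  refine integral_congr_ae (Eventually.of_forall fun ω => ?_)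
  have hee : ∀ t ∈ T, e (R ω) t = u t ω := fun t ht => by simp [e, R, ht]
  have hI : ∀ s ∈ Finset.Ico a n, e (R ω) s = u s ω ∧ e (R ω) (s - j) = u (s - j) ω := by
    intro s hs
    rw [Finset.mem_Ico] at hs
    exact ⟨hee _ (by rw [hT, Finset.mem_Ico]; omega), hee _ (by rw [hT, Finset.mem_Ico]; omega)⟩
  have hn' : e (R ω) (n - j) = u (n - j) ω := hee _ (by rw [hT, Finset.mem_Ico]; omega)
  have eQ : auxQ (Finset.Ico a n) j (e (R ω)) = auxQ (Finset.Ico a n) j (fun t => u t ω) := by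
    unfold auxQ
    refine Finset.sum_congr rfl fun s hs => Finset.sum_congr rfl fun r hr => ?_
    rw [(hI s hs).1, (hI s hs).2, (hI r hr).1, (hI r hr).2]
  have eV : auxV (Finset.Ico a n) j n (e (R ω)) = auxV (Finset.Ico a n) j n (fun t => u t ω) := by
    unfold auxV
    refine Finset.sum_congr rfl fun s hs => ?_
    rw [(hI s hs).1, (hI s hs).2, hn']
  simp only [Function.comp, F, eQ, eV, real_inner_smul_left]

lemma aux_main [CompleteSpace H] [SecondCountableTopology H] [MeasurableSpace H] [BorelSpace H]
    {Ω : Type*} [MeasurableSpace Ω] (P : Measure Ω) [IsProbabilityMeasure P]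
    (u : ℤ → Ω → H) (hmeas : ∀ t, Measurable (u t)) (hindep : iIndepFun u P)
    (hint : ∀ t, Integrable (u t) P) (hmean : ∀ t, ∫ ω, u t ω ∂P = 0)
    (m : ℝ) (hm0 : 0 ≤ m)
    (hX : ∀ t j : ℤ, 1 ≤ j → Integrable (fun ω => ((‖u t ω‖ * ‖u (t - j) ω‖) ^ 2) ^ 2) P)
    (hXm : ∀ t j : ℤ, 1 ≤ j → ∫ ω, ((‖u t ω‖ * ‖u (t - j) ω‖) ^ 2) ^ 2 ∂P = m)
    (a j : ℤ) (hj : 1 ≤ j) (k : ℕ) :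
    Integrable (fun ω => auxQ (Finset.Ico a (a + k)) j (fun t => u t ω) ^ 2) P ∧
    ∫ ω, auxQ (Finset.Ico a (a + k)) j (fun t => u t ω) ^ 2 ∂P ≤ 19 * m * (k : ℝ) ^ 2 := by
  induction k with
  | zero => simp [auxQ]
  | succ k ih =>
    obtain ⟨ih1, ih2⟩ := ih
    set n : ℤ := a + k with hn
    have hI : Finset.Ico a (a + ((k + 1 : ℕ) : ℤ)) = insert n (Finset.Ico a n) := by
      ext x; simp only [Finset.mem_Ico, Finset.mem_insert]; push_cast; omega
    rw [hI]
    have hnot : n ∉ Finset.Ico a n := by simp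
    set q : Ω → ℝ := fun ω => auxQ (Finset.Ico a n) j (fun t => u t ω) with hq
    set L : Ω → ℝ := fun ω => ⟪auxV (Finset.Ico a n) j n (fun t => u t ω), u n ω⟫ with hL
    set x : Ω → ℝ := fun ω => (‖u n ω‖ * ‖u (n - j) ω‖) ^ 2 with hx
    have hmq : Measurable q := aux_measQ _ _ _ hmeas
    have hmL : Measurable L := (aux_measV _ _ _ _ hmeas).inner (hmeas n)
    have hq0 : ∀ ω, 0 ≤ q ω := fun ω => auxQ_nonneg _ _ _
    have hx0 : ∀ ω, 0 ≤ x ω := fun ω => by positivity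
    have hLx : ∀ ω, L ω ^ 2 ≤ q ω * x ω := fun ω =>
      auxV_sq (Finset.Ico a n) j n (fun t => u t ω)
    have hrec : ∀ ω, auxQ (insert n (Finset.Ico a n)) j (fun t => u t ω)
        = q ω + 2 * L ω + x ω := fun ω => auxQ_insert _ j n hnot (fun t => u t ω)
    have ix : Integrable (fun ω => x ω ^ 2) P := hX n j hj
    have iqL : Integrable (fun ω => q ω * L ω) P := by
      refine (ih1.add ix).mono' (hmq.mul hmL).aestronglyMeasurable
        (Eventually.of_forall fun ω => ?_)
      exact aux_absL (hq0 ω) (hx0 ω) (hLx ω)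
    have hc : (0 : ℝ) < (k : ℝ) + 1 := by positivity
    set c : ℝ := (k : ℝ) + 1 with hcdef
    have i1 : Integrable (fun ω => q ω ^ 2) P := ih1
    have i2 : Integrable (fun ω => 4 * (q ω * L ω)) P := iqL.const_mul 4
    have i3 : Integrable (fun ω => c⁻¹ * q ω ^ 2) P := i1.const_mul _
    have i12 : Integrable (fun ω => q ω ^ 2 + 4 * (q ω * L ω)) P := i1.add i2
    have i123 : Integrable (fun ω => q ω ^ 2 + 4 * (q ω * L ω) + c⁻¹ * q ω ^ 2) P := i12.add i3
    have ibd : Integrable (fun ω => q ω ^ 2 + 4 * (q ω * L ω) + c⁻¹ * q ω ^ 2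
        + (16 * c + 3) * x ω ^ 2) P :=
      ((ih1.add (iqL.const_mul 4)).add (ih1.const_mul _)).add (ix.const_mul _)
    have hle : ∀ ω, auxQ (insert n (Finset.Ico a n)) j (fun t => u t ω) ^ 2 ≤
        q ω ^ 2 + 4 * (q ω * L ω) + c⁻¹ * q ω ^ 2 + (16 * c + 3) * x ω ^ 2 := fun ω => by
      rw [hrec]; exact aux_real_s15 (hq0 ω) (hx0 ω) (hLx ω) c hc
    have iQ : Integrable
        (fun ω => auxQ (insert n (Finset.Ico a n)) j (fun t => u t ω) ^ 2) P := by
      refine ibd.mono' ((aux_measQ _ _ _ hmeas).pow_const 2).aestronglyMeasurable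
        (Eventually.of_forall fun ω => ?_)
      rw [Real.norm_of_nonneg (sq_nonneg _)]
      exact hle ω
    refine ⟨iQ, (integral_mono iQ ibd hle).trans ?_⟩
    have hcr : ∫ ω, q ω * L ω ∂P = 0 :=
      aux_cross P u hmeas hindep a n j hj (by omega) (hint n) (hmean n)
    have hxm : ∫ ω, x ω ^ 2 ∂P = m := hXm n j hj
    have e1 : ∫ ω, (q ω ^ 2 + 4 * (q ω * L ω) + c⁻¹ * q ω ^ 2 + (16 * c + 3) * x ω ^ 2) ∂P
        = ∫ ω, q ω ^ 2 ∂P + c⁻¹ * ∫ ω, q ω ^ 2 ∂P + (16 * c + 3) * m := by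
      rw [integral_add i123 (ix.const_mul _), integral_add i12 i3, integral_add i1 i2, integral_const_mul, integral_const_mul,
        integral_const_mul, hcr, hxm]
      ring
    rw [e1]
    have h1 : c⁻¹ * ∫ ω, q ω ^ 2 ∂P ≤ 19 * m * k := by
      rw [inv_mul_le_iff₀ hc]
      refine ih2.trans ?_
      have : 0 ≤ m * (k : ℝ) := by positivity
      rw [hcdef]; nlinarith
    have h2 : (((k + 1 : ℕ) : ℝ)) = c := by push_cast; rfl
    rw [h2]
    have : 0 ≤ m * (k : ℝ) := by positivity
    have hkc : (k : ℝ) = c - 1 := by rw [hcdef]; ring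
    rw [hkc] at h1 ih2 this
    nlinarith

end Helpers

/-- Equation (A.7): for a strong white noise there is a constant `C > 0` (depending only
on the distribution of `u₀`) such that for all `j ≥ 1` and `a ≤ b`,
`E[(Σ_{s=a}^b Σ_{r=a}^b ⟨u_s,u_r⟩⟨u_{s-j},u_{r-j}⟩)²] ≤ C (b-a+1)²`, i.e. the fourth
moment of the HS-norm of `H = Σ_{s=a}^b u_s ⊗ u_{s-j}` is `O((b-a+1)²)`. -/
theorem fourth_moment_H_bound
    {H : Type*} [NormedAddCommGroup H] [InnerProductSpace ℝ H]
    [CompleteSpace H] [SecondCountableTopology H] [MeasurableSpace H] [BorelSpace H]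
    {Ω : Type*} [MeasurableSpace Ω] (P : Measure Ω) [IsProbabilityMeasure P]
    (u : ℤ → Ω → H)
    (hmeas : ∀ t, Measurable (u t))
    (hindep : iIndepFun u P)
    (hident : ∀ t, IdentDistrib (u t) (u 0) P P)
    (hint : Integrable (u 0) P)
    (hmean : ∫ ω, u 0 ω ∂P = 0)
    (hmom4 : Integrable (fun ω => ‖u 0 ω‖ ^ 4) P) :
    ∃ C > (0 : ℝ), ∀ j : ℤ, 1 ≤ j → ∀ a b : ℤ, a ≤ b →
      ∫ ω, (∑ s ∈ Finset.Icc a b, ∑ r ∈ Finset.Icc a b,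
          ⟪u s ω, u r ω⟫ * ⟪u (s - j) ω, u (r - j) ω⟫) ^ 2 ∂P
        ≤ C * ((b - a + 1 : ℤ) : ℝ) ^ 2 := by
  have hid4 : ∀ t, IdentDistrib (fun ω => ‖u t ω‖ ^ 4) (fun ω => ‖u 0 ω‖ ^ 4) P P :=
    fun t => (hident t).comp (measurable_norm.pow_const 4)
  have hi4 : ∀ t, Integrable (fun ω => ‖u t ω‖ ^ 4) P := fun t =>
    (hid4 t).integrable_iff.2 hmom4
  have he4 : ∀ t, ∫ ω, ‖u t ω‖ ^ 4 ∂P = ∫ ω, ‖u 0 ω‖ ^ 4 ∂P := fun t => (hid4 t).integral_eq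
  have hind : ∀ t j : ℤ, 1 ≤ j →
      IndepFun (fun ω => ‖u t ω‖ ^ 4) (fun ω => ‖u (t - j) ω‖ ^ 4) P := fun t j hj =>
    (hindep.indepFun (show t ≠ t - j by omega)).comp
      (measurable_norm.pow_const 4) (measurable_norm.pow_const 4)
  have hpow : ∀ t j : ℤ, (fun ω => ((‖u t ω‖ * ‖u (t - j) ω‖) ^ 2) ^ 2)
      = (fun ω => ‖u t ω‖ ^ 4) * (fun ω => ‖u (t - j) ω‖ ^ 4) := fun t j => by
    funext ω; simp only [Pi.mul_apply]; ring
  set m : ℝ := (∫ ω, ‖u 0 ω‖ ^ 4 ∂P) * ∫ ω, ‖u 0 ω‖ ^ 4 ∂P with hm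
  have hm0 : 0 ≤ m := mul_self_nonneg _
  refine ⟨19 * m + 1, by positivity, fun j hj a b hab => ?_⟩
  have hmain := (aux_main P u hmeas hindep (fun t => (hident t).integrable_iff.2 hint)
    (fun t => (hident t).integral_eq.trans hmean) m hm0
    (fun t j hj => by rw [hpow]; exact (hind t j hj).integrable_mul (hi4 _) (hi4 _))
    (fun t j hj => by
      rw [hpow, (hind t j hj).integral_mul_eq_mul_integral (hi4 _).aestronglyMeasurable
        (hi4 _).aestronglyMeasurable, he4, he4 (t - j)])
    a j hj (b - a + 1).toNat).2
  have hk : (((b - a + 1).toNat : ℕ) : ℤ) = b - a + 1 := Int.toNat_of_nonneg (by omega)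
  have hkr : (((b - a + 1).toNat : ℕ) : ℝ) = ((b - a + 1 : ℤ) : ℝ) := by
    exact_mod_cast congrArg (Int.cast : ℤ → ℝ) hk
  have hI : Finset.Ico a (a + (((b - a + 1).toNat : ℕ) : ℤ)) = Finset.Icc a b := by
    ext x; rw [hk, Finset.mem_Ico, Finset.mem_Icc]; omega
  rw [hI, hkr] at hmain
  refine hmain.trans ?_
  nlinarith [sq_nonneg ((b - a + 1 : ℤ) : ℝ)]

end
end

section
/- Let k be a kernel and (p_n) a bandwidth, and define D_n(k) = Σ_{j=1}^{n−2} (1−j/n)·(1−(j+1)/n)·k(j/p_n)⁴. Then D_n(k)/p_n → ∫₀^∞ k(x)⁴ dx as n → ∞; equivalently, D_n(k) = D(k)·p_n + o(p_n) with D(k) = ∫₀^∞ k(x)⁴ dx (which is finite under the kernel assumptions). -/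
open MeasureTheory Filter Finset Topology

noncomputable section

/-- The step function whose integral is `Dn / p`. -/
def stepF (k : ℝ → ℝ) (p : ℝ) (n : ℕ) (x : ℝ) : ℝ :=
  ∑ j ∈ Finset.Icc 1 (n - 2),
    (Set.Ioc (((j - 1 : ℕ) : ℝ) / p) ((j : ℝ) / p)).indicator
      (fun _ => (1 - (j : ℝ) / n) * (1 - ((j : ℝ) + 1) / n) * k ((j : ℝ) / p) ^ 4) x

theorem stepF_eq (k : ℝ → ℝ) (p : ℝ) (hp : 0 < p) (n : ℕ) (x : ℝ) :
    stepF k p n x = if ⌈x * p⌉₊ ∈ Finset.Icc 1 (n - 2) then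
      (1 - (⌈x * p⌉₊ : ℝ) / n) * (1 - ((⌈x * p⌉₊ : ℝ) + 1) / n) * k ((⌈x * p⌉₊ : ℝ) / p) ^ 4
      else 0 := by
  rw [← Finset.sum_ite_eq (Finset.Icc 1 (n - 2)) ⌈x * p⌉₊
    (fun j : ℕ => (1 - (j : ℝ) / n) * (1 - ((j : ℝ) + 1) / n) * k ((j : ℝ) / p) ^ 4)]
  unfold stepF
  refine Finset.sum_congr rfl fun j hj => ?_
  have hj0 : j ≠ 0 := by
    have := (Finset.mem_Icc.1 hj).1
    omega
  simp only [Set.indicator_apply]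
  refine if_congr ?_ rfl rfl
  rw [Nat.ceil_eq_iff hj0, Set.mem_Ioc, div_lt_iff₀ hp, le_div_iff₀ hp]

theorem stepF_measurable (k : ℝ → ℝ) (p : ℝ) (n : ℕ) : Measurable (stepF k p n) := by
  unfold stepF
  refine Finset.measurable_fun_sum _ fun j _ => ?_
  exact measurable_const.indicator measurableSet_Ioc

theorem stepF_integral (k : ℝ → ℝ) (p : ℝ) (hp : 0 < p) (n : ℕ) :
    ∫ x in Set.Ioi (0 : ℝ), stepF k p n x = Dn k p n / p := by
  unfold stepF Dn
  rw [integral_finset_sum]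
  · rw [Finset.sum_div]
    refine Finset.sum_congr rfl fun j hj => ?_
    have hj1 := (Finset.mem_Icc.1 hj).1
    rw [setIntegral_indicator measurableSet_Ioc]
    have hsub : Set.Ioi (0 : ℝ) ∩ Set.Ioc (((j - 1 : ℕ) : ℝ) / p) ((j : ℝ) / p) =
        Set.Ioc (((j - 1 : ℕ) : ℝ) / p) ((j : ℝ) / p) := by
      apply Set.inter_eq_right.2
      intro x hx
      exact lt_of_le_of_lt (by positivity) hx.1
    rw [hsub, setIntegral_const, Real.volume_real_Ioc_of_le (by gcongr; omega)]
    rw [Nat.cast_sub hj1, smul_eq_mul]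
    push_cast
    ring
  · intro j _
    apply Integrable.integrableOn
    rw [integrable_indicator_iff measurableSet_Ioc]
    exact integrableOn_const (by simp)

theorem weight_bounds (n j : ℕ) (hj : j ∈ Finset.Icc 1 (n - 2)) :
    0 ≤ (1 - (j : ℝ) / n) * (1 - ((j : ℝ) + 1) / n) ∧
      (1 - (j : ℝ) / n) * (1 - ((j : ℝ) + 1) / n) ≤ 1 := by
  obtain ⟨h1, h2⟩ := Finset.mem_Icc.1 hj
  have hn : (0 : ℝ) < n := by
    have : 0 < n := by omega
    exact_mod_cast this
  have h3 : (j : ℝ) + 1 ≤ n := by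
    have : j + 1 ≤ n := by omega
    exact_mod_cast this
  have a1 : (j : ℝ) / n ≤ 1 := by rw [div_le_one hn]; linarith
  have a2 : ((j : ℝ) + 1) / n ≤ 1 := by rw [div_le_one hn]; linarith
  have a3 : 0 ≤ (j : ℝ) / n := by positivity
  have a4 : 0 ≤ ((j : ℝ) + 1) / n := by positivity
  constructor
  · exact mul_nonneg (by linarith) (by linarith)
  · exact mul_le_one₀ (by linarith) (by linarith) (by linarith)

/-- The dominating function. -/
def domG (α c x₀ : ℝ) (x : ℝ) : ℝ := if x ≤ x₀ then 1 else c ^ 4 * x ^ (-(4 * α))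

theorem domG_integrable (α c x₀ : ℝ) (hα : 1 / 2 < α) (hx₀ : 0 < x₀) :
    IntegrableOn (domG α c x₀) (Set.Ioi 0) := by
  rw [← Set.Ioc_union_Ioi_eq_Ioi hx₀.le]
  apply IntegrableOn.union
  · refine IntegrableOn.congr_fun (f := fun _ => (1 : ℝ)) (integrableOn_const (by simp)) ?_
      measurableSet_Ioc
    intro x hx
    simp [domG, hx.2]
  · refine IntegrableOn.congr_fun (f := fun x : ℝ => c ^ 4 * x ^ (-(4 * α)))
      ((integrableOn_Ioi_rpow_of_lt (by linarith) hx₀).const_mul _) ?_ measurableSet_Ioi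
    intro x hx
    simp [domG, not_le.2 (Set.mem_Ioi.1 hx)]

theorem le_domG (k : ℝ → ℝ) (hk1 : ∀ x, k x ∈ Set.Icc (-1 : ℝ) 1) (α c x₀ : ℝ)
    (hα : 1 / 2 < α) (hx₀ : 0 < x₀)
    (hb : ∀ x ≥ x₀, |k x| ≤ c * x ^ (-α)) (x y : ℝ) (hxy : x ≤ y) :
    k y ^ 4 ≤ domG α c x₀ x := by
  have hk4 : k y ^ 4 = |k y| ^ 4 := by rw [Even.pow_abs (by decide)]
  unfold domG
  split_ifs with h
  · rw [hk4]
    exact pow_le_one₀ (abs_nonneg _) (abs_le.2 (hk1 y))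
  · push Not at h
    have hx : 0 < x := hx₀.trans h
    have hy : 0 < y := hx.trans_le hxy
    have h1 : |k y| ^ 4 ≤ (c * y ^ (-α)) ^ 4 :=
      pow_le_pow_left₀ (abs_nonneg _) (hb y (h.le.trans hxy)) 4
    have h2 : (y ^ (-α)) ^ 4 = y ^ (-(4 * α)) := by
      rw [← Real.rpow_natCast, ← Real.rpow_mul hy.le]
      congr 1
      push_cast
      ring
    rw [mul_pow, h2] at h1
    rw [hk4]
    refine h1.trans ?_
    gcongr ?_ * ?_
    exact Real.rpow_le_rpow_of_nonpos hx hxy (by linarith)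

theorem stepF_tendsto (k : ℝ → ℝ) (p : ℕ → ℝ) (hp : IsBandwidth p) (x : ℝ) (hx : 0 < x)
    (hc : ContinuousAt k x) :
    Tendsto (fun n => stepF k (p n) n x) atTop (𝓝 (k x ^ 4)) := by
  obtain ⟨hpos, hinf, hpn⟩ := hp
  have hy : Tendsto (fun n => (⌈x * p n⌉₊ : ℝ) / p n) atTop (𝓝 x) :=
    (tendsto_nat_ceil_mul_div_atTop hx.le).comp hinf
  have hkk : Tendsto (fun n => k ((⌈x * p n⌉₊ : ℝ) / p n) ^ 4) atTop (𝓝 (k x ^ 4)) :=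
    (hc.tendsto.comp hy).pow 4
  have hjn : Tendsto (fun n : ℕ => (⌈x * p n⌉₊ : ℝ) / n) atTop (𝓝 0) := by
    have := hy.mul hpn
    rw [mul_zero] at this
    refine this.congr fun n => ?_
    rw [div_mul_div_cancel₀ (hpos n).ne']
  have hjn1 : Tendsto (fun n : ℕ => ((⌈x * p n⌉₊ : ℝ) + 1) / n) atTop (𝓝 0) := by
    have := hjn.add (tendsto_one_div_atTop_nhds_zero_nat (𝕜 := ℝ))
    rw [add_zero] at this
    refine this.congr fun n => ?_
    rw [add_div]
  have hmain : Tendsto (fun n : ℕ => (1 - (⌈x * p n⌉₊ : ℝ) / n) *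
      (1 - ((⌈x * p n⌉₊ : ℝ) + 1) / n) * k ((⌈x * p n⌉₊ : ℝ) / p n) ^ 4) atTop
      (𝓝 (k x ^ 4)) := by
    have := ((hjn.const_sub 1).mul (hjn1.const_sub 1)).mul hkk
    simpa using this
  refine hmain.congr' ?_
  filter_upwards [hjn1.eventually (gt_mem_nhds (show (0 : ℝ) < 1 by norm_num)),
    eventually_gt_atTop 0] with n h1 hn
  rw [stepF_eq k (p n) (hpos n), if_pos]
  have hn' : (0 : ℝ) < n := by exact_mod_cast hn
  rw [div_lt_one hn'] at h1
  have h2 : ⌈x * p n⌉₊ + 1 < n := by exact_mod_cast h1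
  have h3 : 0 < ⌈x * p n⌉₊ := Nat.ceil_pos.2 (mul_pos hx (hpos n))
  rw [Finset.mem_Icc]
  omega

/-- **Remark 2.2**: for a kernel `k` and bandwidth `(p_n)`, `k⁴` is integrable on
`(0,∞)` and `D_n(k)/p_n → D(k) = ∫₀^∞ k(x)⁴ dx`, i.e. `D_n(k) = D(k) p_n + o(p_n)`. -/
theorem Dn_div_p_tendsto
    (k : ℝ → ℝ) (hk : IsKernel k) (p : ℕ → ℝ) (hp : IsBandwidth p) :
    IntegrableOn (fun x => k x ^ 4) (Set.Ioi (0 : ℝ)) ∧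
    Tendsto (fun n => Dn k (p n) n / p n) atTop
      (𝓝 (∫ x in Set.Ioi (0 : ℝ), k x ^ 4)) := by
  obtain ⟨hk1, -, -, -, hfin, α, hα, c, hc, x₀, hx₀, hb⟩ := hk
  have hae : ∀ᵐ x ∂(volume.restrict (Set.Ioi (0 : ℝ))),
      Tendsto (fun n => stepF k (p n) n x) atTop (𝓝 (k x ^ 4)) := by
    have h1 : ∀ᵐ x ∂(volume.restrict (Set.Ioi (0 : ℝ))), ContinuousAt k x := by
      apply ae_restrict_of_ae
      rw [ae_iff]
      exact hfin.measure_zero _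
    filter_upwards [h1, ae_restrict_mem measurableSet_Ioi] with x hx hx0
    exact stepF_tendsto k p hp x hx0 hx
  have hmeas : AEStronglyMeasurable (fun x => k x ^ 4) (volume.restrict (Set.Ioi (0 : ℝ))) :=
    aestronglyMeasurable_of_tendsto_ae atTop
      (fun n => (stepF_measurable k (p n) n).aestronglyMeasurable) hae
  have hG := domG_integrable α c x₀ hα hx₀
  refine ⟨hG.mono' hmeas ?_, ?_⟩
  · refine Eventually.of_forall fun x => ?_
    rw [Real.norm_of_nonneg (by positivity)]
    exact le_domG k hk1 α c x₀ hα hx₀ hb x x le_rfl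
  · refine (tendsto_integral_of_dominated_convergence (domG α c x₀)
      (fun n => (stepF_measurable k (p n) n).aestronglyMeasurable) hG ?_ hae).congr
      fun n => stepF_integral k (p n) (hp.1 n) n
    intro n
    refine Eventually.of_forall fun x => ?_
    have hpn := hp.1 n
    have hxy : x ≤ (⌈x * p n⌉₊ : ℝ) / p n := by
      rw [le_div_iff₀ hpn]
      exact Nat.le_ceil _
    have hle := le_domG k hk1 α c x₀ hα hx₀ hb x _ hxy
    have h4 : 0 ≤ k ((⌈x * p n⌉₊ : ℝ) / p n) ^ 4 := by positivity
    rw [stepF_eq k (p n) hpn]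
    split_ifs with h
    · obtain ⟨w0, w1⟩ := weight_bounds n _ h
      rw [Real.norm_of_nonneg (mul_nonneg w0 h4)]
      exact (mul_le_of_le_one_left h4 w1).trans hle
    · rw [norm_zero]
      exact h4.trans hle


end
end

section
/- Let k be a kernel and (p_n) a bandwidth, and define C_n(k) = Σ_{j=1}^{n−1} (1−j/n)·k(j/p_n)². Then n^{-1}·C_n(k) → 0 as n → ∞. -/
open MeasureTheory Filter Finset Topology

noncomputable section

/-- For a kernel `k` and bandwidth `(p_n)`, `n⁻¹ C_n(k) → 0` as `n → ∞`. -/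
theorem Cn_div_n_tendsto_zero
    (k : ℝ → ℝ) (hk : IsKernel k) (p : ℕ → ℝ) (hp : IsBandwidth p) :
    Tendsto (fun (n : ℕ) => (n : ℝ)⁻¹ * Cn k (p n) n) atTop (𝓝 0) := by
  obtain ⟨hb, -, -, -, -, α, hα, c, hc, x₀, hx₀, hdec⟩ := hk
  obtain ⟨hpos, -, hpn⟩ := hp
  have hsq : ∀ x, k x ^ 2 ≤ 1 := fun x => by
    have := hb x
    nlinarith [this.1, this.2]
  rw [Metric.tendsto_atTop']
  intro ε hε
  -- the squared kernel is eventually small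
  have hlim : Tendsto (fun x : ℝ => (c * x ^ (-α)) ^ 2) atTop (𝓝 0) := by
    have h := ((tendsto_rpow_neg_atTop (show (0 : ℝ) < α by linarith)).const_mul c).pow 2
    simpa using h
  obtain ⟨M, hM0, hMx, hM⟩ : ∃ M : ℝ, 0 < M ∧ x₀ ≤ M ∧ ∀ x ≥ M, k x ^ 2 ≤ ε / 2 := by
    obtain ⟨N, hN⟩ := eventually_atTop.1 (hlim.eventually (gt_mem_nhds (half_pos hε)))
    refine ⟨max N x₀, lt_of_lt_of_le hx₀ (le_max_right _ _), le_max_right _ _, fun x hx => ?_⟩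
    have h1 := hN x (le_trans (le_max_left _ _) hx)
    have h2 := hdec x (le_trans (le_max_right _ _) hx)
    have h3 : |k x| ^ 2 ≤ (c * x ^ (-α)) ^ 2 := pow_le_pow_left₀ (abs_nonneg _) h2 2
    rw [sq_abs] at h3
    linarith
  have hev : ∀ᶠ n : ℕ in atTop, p n / (n : ℝ) < ε / (2 * M) :=
    hpn.eventually (gt_mem_nhds (by positivity))
  obtain ⟨N, hN⟩ := eventually_atTop.1 hev
  refine ⟨N, fun n hn => ?_⟩
  have hn0 : (0 : ℝ) < n := by exact_mod_cast (lt_of_le_of_lt (Nat.zero_le N) hn)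
  have hnp := hN n hn.le
  have hp0 := hpos n
  have hw : ∀ j ∈ Finset.Icc 1 (n - 1), (0 : ℝ) ≤ 1 - (j : ℝ) / n ∧ 1 - (j : ℝ) / n ≤ 1 := by
    intro j hj
    have hj' : (j : ℝ) ≤ n := by
      have := (Finset.mem_Icc.1 hj).2
      exact_mod_cast (by omega : j ≤ n)
    have h1 : (j : ℝ) / n ≤ 1 := (div_le_one hn0).2 hj'
    have h2 : (0 : ℝ) ≤ (j : ℝ) / n := by positivity
    constructor <;> linarith
  have hC0 : 0 ≤ Cn k (p n) n :=
    Finset.sum_nonneg fun j hj => mul_nonneg (hw j hj).1 (sq_nonneg _)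
  have hC : Cn k (p n) n ≤ M * p n + n * (ε / 2) := by
    unfold Cn
    calc ∑ j ∈ Finset.Icc 1 (n - 1), (1 - (j : ℝ) / n) * k ((j : ℝ) / p n) ^ 2
        ≤ ∑ j ∈ Finset.Icc 1 (n - 1), ((if (j : ℝ) ≤ M * p n then (1 : ℝ) else 0) + ε / 2) := by
          refine Finset.sum_le_sum fun j hj => ?_
          have h1 : (1 - (j : ℝ) / n) * k ((j : ℝ) / p n) ^ 2 ≤ k ((j : ℝ) / p n) ^ 2 :=
            mul_le_of_le_one_left (sq_nonneg _) (hw j hj).2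
          refine h1.trans ?_
          split_ifs with h
          · linarith [hsq ((j : ℝ) / p n)]
          · have := hM ((j : ℝ) / p n) ((le_div_iff₀ hp0).2 (not_le.1 h).le)
            linarith
      _ ≤ M * p n + n * (ε / 2) := by
          rw [Finset.sum_add_distrib, Finset.sum_boole]
          have hMp : 0 ≤ M * p n := by positivity
          apply add_le_add
          · have hsub : (Finset.Icc 1 (n - 1)).filter (fun j : ℕ => (j : ℝ) ≤ M * p n)
                ⊆ Finset.Icc 1 ⌊M * p n⌋₊ := by
              intro j hj
              rw [Finset.mem_filter, Finset.mem_Icc] at hj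
              exact Finset.mem_Icc.2 ⟨hj.1.1, Nat.le_floor hj.2⟩
            have hcard := Finset.card_le_card hsub
            rw [Nat.card_Icc, Nat.add_sub_cancel] at hcard
            exact (Nat.cast_le.2 hcard).trans (Nat.floor_le hMp)
          · rw [Finset.sum_const, nsmul_eq_mul, Nat.card_Icc]
            have : ((n - 1 + 1 - 1 : ℕ) : ℝ) ≤ n := by
              exact_mod_cast (by omega : n - 1 + 1 - 1 ≤ n)
            exact mul_le_mul_of_nonneg_right this (by positivity)
  rw [Real.dist_eq, sub_zero, abs_of_nonneg (by positivity), inv_mul_lt_iff₀ hn0]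
  rw [div_lt_div_iff₀ hn0 (by positivity)] at hnp
  nlinarith

end
end
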